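/- Poincaré inequality for the Dirichlet distribution with sharp constant: for N ≥ 2 and every f ∈ C^1(Δ^(N)), Var_{μ_α^(N)}(f) ≤ (1/α_{N+1}) ∫_{Δ^(N)} (1−|x|_1) Σ_{n=1}^N x_n (∂_n f)²(x) dμ_α^(N)(x), and the constant 1/α_{N+1} cannot be improved. -/

import Mathlib

/-!
Write `d_i` for the partial derivatives and `A` for the sum of the parameters. The energy
`(1 - |x|) ∑ x_i d_i²` only lets mass travel between the implicit last coordinate `1 - |x|` and the
others: it is the energy of a star. Its centre is moved to coordinate `0` by the affine involution
`reflect`, and that coordinate is used as a stick: `x = (z, (1 - z) v)` with `z` beta distributed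
and `v` an independent Dirichlet vector (`dirichlet_succ`).

Let `F z v = f (z, (1 - z) v)`. Its variance is the variance of the fibre mean `m z = E_v F z v`
plus the mean of the fibre variance `W z = Var_v (F z ·)`. Along the stick, the star energy
is `z (1 - z) (P² + Q)`, where `P = ∂F/∂z` and `(1 - z)² Q` is the Wright–Fisher energy
`∑ v_i d_i² - (∑ v_i d_i)²` of `F z ·` (`star_at_stick`, `wf_stick`). Three facts are combined.

* The beta law `z^(b-1) (1-z)^(a-1)` has a Poincaré inequality with constant `a + b`
  (`beta_poincare`, from Stein's identity and Cauchy–Schwarz), which controls the variance of `m`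
  by the part `(E_v P)²` of the energy.
* The Dirichlet law has a Wright–Fisher Poincaré inequality with constant `A` (`wf_poincare`), so
  that `a W ≤ (1 - z)² E_v Q`. It is proved by induction on the dimension with the same
  decomposition, as the Wright–Fisher energy along the stick is `z (1 - z) P² + (1 - z) Q`.
* Since all fibres meet at `z = 1`, the weighted Hardy inequality `beta_hardy` bounds
  `b E W` by the remaining energy `E z (1 - z) (Var_v P + Q)`: expand
  `Var_v (P + F / (1 - z)) ≥ 0` and apply Stein's identity to `W / (1 - z)`.

Adding up (`stick_step`) gives `(a + b) Var m + b E W ≤ E (energy)`, hence the inequality with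
constant `b`, the parameter of the centre.

The constant is optimal because `x_0 / α_0 - x_1 / α_1` is an eigenfunction: moments of order two,
computed by raising one parameter of the density, show that equality holds for it
(`dirichlet_poincare_optimal`).
-/

open MeasureTheory

noncomputable section

def simplex (N : ℕ) : Set (Fin N → ℝ) :=
  {x | (∀ i, 0 ≤ x i ∧ x i ≤ 1) ∧ ∑ i, x i ≤ 1}

def dirichletDensity (N : ℕ) (α : Fin (N + 1) → ℝ) (x : Fin N → ℝ) : ℝ :=
  (Real.Gamma (∑ k, α k) / ∏ k, Real.Gamma (α k)) *
    Real.rpow (1 - ∑ i, x i) (α (Fin.last N) - 1) *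
    ∏ i, Real.rpow (x i) (α (Fin.castSucc i) - 1)

def dirichlet (N : ℕ) (α : Fin (N + 1) → ℝ) : Measure (Fin N → ℝ) :=
  (volume.restrict (simplex N)).withDensity fun x => ENNReal.ofReal (dirichletDensity N α x)

/-- Partial derivative ∂_n f at x. -/
def pd (N : ℕ) (n : Fin N) (f : (Fin N → ℝ) → ℝ) (x : Fin N → ℝ) : ℝ :=
  fderiv ℝ f x (Pi.single n 1)

/-- The generator L_α^(N) = Σ_n [x_n(1−|x|₁)∂_n² + (α_n(1−|x|₁) − α_{N+1} x_n)∂_n]. -/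
def Lop (N : ℕ) (α : Fin (N + 1) → ℝ) (f : (Fin N → ℝ) → ℝ) (x : Fin N → ℝ) : ℝ :=
  ∑ n, (x n * (1 - ∑ i, x i) * pd N n (fun y => pd N n f y) x
    + (α (Fin.castSucc n) * (1 - ∑ i, x i) - α (Fin.last N) * x n) * pd N n f x)

section

open MeasureTheory ProbabilityTheory Set Filter Topology

/-! ### The beta distribution -/

lemma measurable_betaPDF (b a : ℝ) : Measurable (betaPDF b a) :=
  (measurable_betaPDFReal b a).ennreal_ofReal

lemma ae_beta_mem (b a : ℝ) : ∀ᵐ z ∂betaMeasure b a, z ∈ Ioo (0 : ℝ) 1 := by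
  rw [betaMeasure, ae_withDensity_iff (measurable_betaPDF b a)]
  refine ae_of_all _ fun z hz => ?_
  by_contra h
  exact hz (by rw [betaPDF_eq]; exact (congrArg _ (if_neg h)).trans ENNReal.ofReal_zero)

lemma betaPDFReal_nonneg {b a : ℝ} (hb : 0 < b) (ha : 0 < a) (z : ℝ) :
    0 ≤ betaPDFReal b a z := by
  by_cases h : 0 < z ∧ z < 1
  · exact (betaPDFReal_pos h.1 h.2 hb ha).le
  · rw [betaPDFReal, if_neg h]

lemma integral_beta {b a : ℝ} (hb : 0 < b) (ha : 0 < a) (h : ℝ → ℝ) :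
    ∫ z, h z ∂betaMeasure b a = ∫ z, betaPDFReal b a z * h z := by
  rw [betaMeasure, integral_withDensity_eq_integral_toReal_smul
    (measurable_betaPDF b a) (ae_of_all _ fun _ => ENNReal.ofReal_lt_top)]
  refine integral_congr_ae (ae_of_all _ fun z => ?_)
  simp [betaPDF, ENNReal.toReal_ofReal (betaPDFReal_nonneg hb ha z)]

lemma integrable_beta_iff {b a : ℝ} (hb : 0 < b) (ha : 0 < a) (h : ℝ → ℝ) :
    Integrable h (betaMeasure b a) ↔ Integrable fun z => betaPDFReal b a z * h z := by
  rw [betaMeasure, integrable_withDensity_iff_integrable_smul'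
    (measurable_betaPDF b a) (ae_of_all _ fun _ => ENNReal.ofReal_lt_top)]
  refine integrable_congr (ae_of_all _ fun z => ?_)
  simp [betaPDF, ENNReal.toReal_ofReal (betaPDFReal_nonneg hb ha z)]

lemma integrable_beta_of_bounded {b a : ℝ} (hb : 0 < b) (ha : 0 < a) {h : ℝ → ℝ} {M : ℝ}
    (hc : ContinuousOn h (Ioo 0 1)) (hM : ∀ z ∈ Ioo (0 : ℝ) 1, |h z| ≤ M) :
    Integrable h (betaMeasure b a) := by
  have := isProbabilityMeasureBeta hb ha
  have e : (betaMeasure b a).restrict (Ioo 0 1) = betaMeasure b a :=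
    Measure.restrict_eq_self_of_ae_mem (ae_beta_mem b a)
  refine Integrable.of_bound (C := M) ?_ ?_
  · rw [← e]; exact hc.aestronglyMeasurable measurableSet_Ioo
  · filter_upwards [ae_beta_mem b a] with z hz using hM z hz

lemma integrable_beta_of_continuous {b a : ℝ} (hb : 0 < b) (ha : 0 < a) {h : ℝ → ℝ}
    (hc : Continuous h) : Integrable h (betaMeasure b a) := by
  obtain ⟨M, hM⟩ := (isCompact_Icc (a := (0 : ℝ)) (b := 1)).exists_bound_of_continuousOn
    hc.continuousOn
  exact integrable_beta_of_bounded hb ha hc.continuousOn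
    fun z hz => hM z (Ioo_subset_Icc_self hz)

/-- Stein's identity for the beta law: the generator `z(1-z)∂ + (b-(a+b)z)` integrates to zero. The
boundary terms vanish because `H` is bounded. -/
lemma beta_stein {b a : ℝ} (hb : 0 < b) (ha : 0 < a) {H H' : ℝ → ℝ} {M : ℝ}
    (hd : ∀ z ∈ Ioo (0 : ℝ) 1, HasDerivAt H (H' z) z) (hc : ContinuousOn H' (Ioo 0 1))
    (hM : ∀ z ∈ Ioo (0 : ℝ) 1, |H z| ≤ M) (hM' : ∀ z ∈ Ioo (0 : ℝ) 1, |H' z| ≤ M) :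
    Integrable (fun z => (b - (a + b) * z) * H z + z * (1 - z) * H' z) (betaMeasure b a) ∧
      ∫ z, ((b - (a + b) * z) * H z + z * (1 - z) * H' z) ∂betaMeasure b a = 0 := by
  have hHc : ContinuousOn H (Ioo 0 1) := fun z hz => (hd z hz).continuousAt.continuousWithinAt
  set k : ℝ → ℝ := fun z => (b - (a + b) * z) * H z + z * (1 - z) * H' z with hk
  have hkc : ContinuousOn k (Ioo 0 1) := by
    apply ContinuousOn.add
    · exact (by fun_prop : Continuous fun z : ℝ => b - (a + b) * z).continuousOn.mul hHc
    · exact (by fun_prop : Continuous fun z : ℝ => z * (1 - z)).continuousOn.mul hc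
  have hint : Integrable k (betaMeasure b a) := by
    refine integrable_beta_of_bounded hb ha (M := (b + (a + b)) * M + M) hkc fun z hz => ?_
    have h1 : |b - (a + b) * z| ≤ b + (a + b) := by
      rw [abs_le]; constructor <;> nlinarith [hz.1, hz.2]
    have h2 : |z * (1 - z)| ≤ 1 := by
      rw [abs_le]; constructor <;> nlinarith [hz.1, hz.2]
    have h0 : 0 ≤ M := (abs_nonneg _).trans (hM z hz)
    calc |k z| ≤ |b - (a + b) * z| * |H z| + |z * (1 - z)| * |H' z| := by
          rw [← abs_mul, ← abs_mul]; exact abs_add_le _ _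
      _ ≤ (b + (a + b)) * M + 1 * M := by
          gcongr
          · exact hM z hz
          · exact hM' z hz
      _ = _ := by ring
  refine ⟨hint, ?_⟩
  rw [integral_beta hb ha]
  rw [integrable_beta_iff hb ha] at hint
  set Φ : ℝ → ℝ := fun z => 1 / beta b a * (z ^ b * (1 - z) ^ a * H z) with hΦ
  have hder : ∀ z ∈ Ioo (0 : ℝ) 1, HasDerivAt Φ (betaPDFReal b a z * k z) z := by
    intro z hz
    have h1 : HasDerivAt (fun z : ℝ => z ^ b) (b * z ^ (b - 1)) z :=
      Real.hasDerivAt_rpow_const (Or.inl hz.1.ne')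
    have h2 : HasDerivAt (fun z : ℝ => (1 - z) ^ a) (-1 * a * (1 - z) ^ (a - 1)) z :=
      ((hasDerivAt_id z).const_sub 1).rpow_const (Or.inl (by simpa using (sub_pos.2 hz.2).ne'))
    have h3 := (((h1.mul h2).mul (hd z hz)).const_mul (1 / beta b a))
    refine h3.congr_deriv ?_
    have e1 : z ^ b = z ^ (b - 1) * z := by
      rw [← Real.rpow_add_one hz.1.ne']; ring_nf
    have e2 : (1 - z) ^ a = (1 - z) ^ (a - 1) * (1 - z) := by
      rw [← Real.rpow_add_one (sub_pos.2 hz.2).ne']; ring_nf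
    rw [betaPDFReal, if_pos (And.intro hz.1 hz.2)]
    simp only [hk, e1, e2, Pi.mul_apply]
    ring
  have hbd : ∀ z ∈ Ioo (0 : ℝ) 1,
      ‖Φ z‖ ≤ |1 / beta b a| * (z ^ b * (1 - z) ^ a * M) := by
    intro z hz
    have hz1 : 0 ≤ 1 - z := (sub_pos.2 hz.2).le
    rw [hΦ, Real.norm_eq_abs, abs_mul, abs_mul, abs_mul,
      abs_of_nonneg (Real.rpow_nonneg hz.1.le b), abs_of_nonneg (Real.rpow_nonneg hz1 a)]
    have := hM z hz
    have := Real.rpow_nonneg hz.1.le b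
    have := Real.rpow_nonneg hz1 a
    gcongr
  have hcont : Continuous fun z : ℝ => |1 / beta b a| * (z ^ b * (1 - z) ^ a * M) := by
    have : Continuous fun z : ℝ => z ^ b := Real.continuous_rpow_const hb.le
    have : Continuous fun z : ℝ => (1 - z) ^ a :=
      (Real.continuous_rpow_const ha.le).comp (by fun_prop)
    fun_prop
  have t0 : Tendsto Φ (𝓝[>] 0) (𝓝 0) := by
    refine squeeze_zero_norm' (a := fun z : ℝ => |1 / beta b a| * (z ^ b * (1 - z) ^ a * M)) ?_ ?_
    · filter_upwards [Ioo_mem_nhdsGT (zero_lt_one' ℝ)] with z hz using hbd z hz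
    · have := (hcont.tendsto 0).mono_left (nhdsWithin_le_nhds (s := Ioi 0))
      simpa [Real.zero_rpow hb.ne'] using this
  have t1 : Tendsto Φ (𝓝[<] 1) (𝓝 0) := by
    refine squeeze_zero_norm' (a := fun z : ℝ => |1 / beta b a| * (z ^ b * (1 - z) ^ a * M)) ?_ ?_
    · filter_upwards [Ioo_mem_nhdsLT (zero_lt_one' ℝ)] with z hz using hbd z hz
    · have := (hcont.tendsto 1).mono_left (nhdsWithin_le_nhds (s := Iio 1))
      simpa [Real.zero_rpow ha.ne'] using this
  have key := intervalIntegral.integral_eq_sub_of_hasDerivAt_of_tendsto (zero_lt_one' ℝ) hder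
    hint.intervalIntegrable t0 t1
  rw [intervalIntegral.integral_of_le zero_le_one, integral_Ioc_eq_integral_Ioo, sub_zero] at key
  rw [← key, ← integral_indicator measurableSet_Ioo]
  refine integral_congr_ae (ae_of_all _ fun z => ?_)
  by_cases hz : z ∈ Ioo (0 : ℝ) 1
  · simp [indicator_of_mem hz, hk]
  · have : betaPDFReal b a z = 0 := by rw [betaPDFReal]; exact if_neg hz
    simp [indicator_of_notMem hz, this]

lemma sq_sub_le_mul_sub {m m' : ℝ → ℝ} (hd : ∀ z, HasDerivAt m (m' z) z) (hc : Continuous m')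
    (x y : ℝ) :
    (m x - m y) ^ 2 ≤ (x - y) * ((∫ t in (0 : ℝ)..x, m' t ^ 2) - ∫ t in (0 : ℝ)..y, m' t ^ 2) := by
  have hi : ∀ u v, IntervalIntegrable (fun t => m' t ^ 2) volume u v :=
    fun u v => (hc.pow 2).intervalIntegrable u v
  rw [intervalIntegral.integral_interval_sub_left (hi _ _) (hi _ _)]
  have main : ∀ u v : ℝ, u < v → (m v - m u) ^ 2 ≤ (v - u) * ∫ t in u..v, m' t ^ 2 := by
    intro u v huv
    have e : ∫ t in u..v, m' t = m v - m u :=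
      intervalIntegral.integral_eq_sub_of_hasDerivAt (fun z _ => hd z) (hc.intervalIntegrable _ _)
    set s := (m v - m u) / (v - u) with hs
    have h0 : 0 ≤ ∫ t in u..v, (m' t - s) ^ 2 :=
      intervalIntegral.integral_nonneg huv.le fun t _ => sq_nonneg _
    have h1 : ∫ t in u..v, (m' t - s) ^ 2
        = (∫ t in u..v, m' t ^ 2) - 2 * s * (m v - m u) + s ^ 2 * (v - u) := by
      have : ∀ t, (m' t - s) ^ 2 = m' t ^ 2 - 2 * s * m' t + s ^ 2 := fun t => by ring
      simp_rw [this]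
      rw [intervalIntegral.integral_add, intervalIntegral.integral_sub,
        intervalIntegral.integral_const_mul, e, intervalIntegral.integral_const, smul_eq_mul]
      · ring
      all_goals apply Continuous.intervalIntegrable; fun_prop
    rw [h1] at h0
    have hp : 0 < v - u := sub_pos.2 huv
    have h2 : s * (v - u) = m v - m u := by rw [hs]; field_simp
    nlinarith [mul_nonneg hp.le h0]
  rcases lt_trichotomy x y with h | h | h
  · have := main x y h
    rw [intervalIntegral.integral_symm]
    nlinarith
  · simp [h]
  · exact main y x h

/-- Poincaré inequality for the beta law with the Jacobi spectral gap `a + b`. The mean minimizes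
the quadratic error, so the variance is at most `E (m X - m μ)²` with `μ = E X`; Cauchy–Schwarz
bounds this by `E (X - μ)(G X - G μ) = E (X - μ) G X` with `G' = m'²`, and Stein's
identity computes the latter. -/
lemma beta_poincare {b a : ℝ} (hb : 0 < b) (ha : 0 < a) {m m' : ℝ → ℝ}
    (hd : ∀ z, HasDerivAt m (m' z) z) (hc : Continuous m') :
    (a + b) * ((∫ z, m z ^ 2 ∂betaMeasure b a) - (∫ z, m z ∂betaMeasure b a) ^ 2)
      ≤ ∫ z, z * (1 - z) * m' z ^ 2 ∂betaMeasure b a := by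
  have := isProbabilityMeasureBeta hb ha
  have I : ∀ {h : ℝ → ℝ}, Continuous h → Integrable h (betaMeasure b a) :=
    fun h => integrable_beta_of_continuous hb ha h
  have hab : 0 < a + b := by positivity
  have hmc : Continuous m := continuous_iff_continuousAt.2 fun z => (hd z).continuousAt
  set G : ℝ → ℝ := fun x => ∫ t in (0 : ℝ)..x, m' t ^ 2 with hG
  have hGd : ∀ z, HasDerivAt G (m' z ^ 2) z := fun z =>
    intervalIntegral.integral_hasDerivAt_right ((hc.pow 2).intervalIntegrable _ _)
      ((hc.pow 2).stronglyMeasurableAtFilter _ _) (hc.pow 2).continuousAt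
  have hGc : Continuous G := continuous_iff_continuousAt.2 fun z => (hGd z).continuousAt
  have stein : ∀ {H H' : ℝ → ℝ}, (∀ z, HasDerivAt H (H' z) z) → Continuous H' →
      ∫ z, ((b - (a + b) * z) * H z + z * (1 - z) * H' z) ∂betaMeasure b a = 0 := by
    intro H H' h1 h2
    have hHc : Continuous H := continuous_iff_continuousAt.2 fun z => (h1 z).continuousAt
    obtain ⟨M, hM⟩ := (isCompact_Icc (a := (0 : ℝ)) (b := 1)).exists_bound_of_continuousOn
      hHc.continuousOn
    obtain ⟨M', hM'⟩ := (isCompact_Icc (a := (0 : ℝ)) (b := 1)).exists_bound_of_continuousOn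
      h2.continuousOn
    refine (beta_stein hb ha (M := max M M') (fun z _ => h1 z) h2.continuousOn
      (fun z hz => (hM z (Ioo_subset_Icc_self hz)).trans (le_max_left _ _))
      (fun z hz => (hM' z (Ioo_subset_Icc_self hz)).trans (le_max_right _ _))).2
  set μ : ℝ := b / (a + b) with hμ
  have hμ' : (a + b) * μ = b := by rw [hμ]; field_simp
  have mean : ∫ z, (z - μ) ∂betaMeasure b a = 0 := by
    have := stein (H := fun _ => 1) (H' := fun _ => 0) (fun z => hasDerivAt_const z 1)
      continuous_const
    have e : ∀ z : ℝ, (b - (a + b) * z) * 1 + z * (1 - z) * 0 = -(a + b) * (z - μ) := by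
      intro z; linear_combination -hμ'
    simp_rw [e, integral_const_mul] at this
    rcases mul_eq_zero.1 this with h | h
    · linarith
    · exact h
  have cov : (a + b) * ∫ z, (z - μ) * G z ∂betaMeasure b a
      = ∫ z, z * (1 - z) * m' z ^ 2 ∂betaMeasure b a := by
    have := stein hGd (hc.pow 2)
    have e : ∀ z : ℝ, (b - (a + b) * z) * G z + z * (1 - z) * m' z ^ 2
        = z * (1 - z) * m' z ^ 2 - (a + b) * ((z - μ) * G z) := by
      intro z; linear_combination -G z * hμ'
    simp_rw [e] at this
    rw [integral_sub (I (by fun_prop)) (I (by fun_prop)), integral_const_mul] at this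
    linarith
  have step : ∫ z, (m z - m μ) ^ 2 ∂betaMeasure b a
      ≤ ∫ z, ((z - μ) * G z - G μ * (z - μ)) ∂betaMeasure b a := by
    refine integral_mono (I (by fun_prop)) (I (by fun_prop)) fun z => ?_
    have := sq_sub_le_mul_sub hd hc z μ
    simp only
    linarith [this]
  rw [integral_sub (I (by fun_prop)) (I (by fun_prop)), integral_const_mul, mean] at step
  have e : ∫ z, (m z - m μ) ^ 2 ∂betaMeasure b a
      = (∫ z, m z ^ 2 ∂betaMeasure b a) - 2 * m μ * (∫ z, m z ∂betaMeasure b a) + m μ ^ 2 := by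
    have : ∀ z, (m z - m μ) ^ 2 = m z ^ 2 - 2 * m μ * m z + m μ ^ 2 := fun z => by ring
    simp_rw [this]
    rw [integral_add (I (by fun_prop)) (I (by fun_prop)),
      integral_sub (I (by fun_prop)) (I (by fun_prop)), integral_const_mul, integral_const]
    simp
  rw [← cov]
  refine mul_le_mul_of_nonneg_left ?_ hab.le
  nlinarith [sq_nonneg ((∫ z, m z ∂betaMeasure b a) - m μ)]

/-! ### Beta mixtures of fibres -/

section Fibre

variable {n : ℕ} {ν : Measure (Fin n → ℝ)} [IsProbabilityMeasure ν] {K : Set (Fin n → ℝ)}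

lemma integrable_of_compact_support (hK : IsCompact K) (hν : ∀ᵐ v ∂ν, v ∈ K)
    {g : (Fin n → ℝ) → ℝ} (hg : Continuous g) : Integrable g ν := by
  obtain ⟨M, hM⟩ := hK.exists_bound_of_continuousOn hg.continuousOn
  refine Integrable.of_bound (C := M) hg.aestronglyMeasurable ?_
  filter_upwards [hν] with v hv using hM v hv

lemma continuous_fibre_integral (hK : IsCompact K) (hν : ∀ᵐ v ∂ν, v ∈ K)
    {F : ℝ → (Fin n → ℝ) → ℝ} (hF : Continuous (Function.uncurry F)) :
    Continuous fun z => ∫ v, F z v ∂ν := by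
  have := continuous_parametric_integral_of_continuous (μ := ν) hF hK
  rwa [Measure.restrict_eq_self_of_ae_mem hν] at this

lemma hasDerivAt_fibre_integral (hK : IsCompact K) (hν : ∀ᵐ v ∂ν, v ∈ K)
    {F P : ℝ → (Fin n → ℝ) → ℝ} (hF : Continuous (Function.uncurry F))
    (hP : Continuous (Function.uncurry P)) (hd : ∀ z v, HasDerivAt (fun z => F z v) (P z v) z)
    (z : ℝ) : HasDerivAt (fun z => ∫ v, F z v ∂ν) (∫ v, P z v ∂ν) z := by
  obtain ⟨M, hM⟩ := ((isCompact_Icc (a := z - 1) (b := z + 1)).prod hK).exists_bound_of_continuousOn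
    hP.continuousOn
  have hFz : ∀ z, Continuous (F z) := fun z => hF.comp (by fun_prop : Continuous fun v => (z, v))
  have hPz : ∀ z, Continuous (P z) := fun z => hP.comp (by fun_prop : Continuous fun v => (z, v))
  refine (hasDerivAt_integral_of_dominated_loc_of_deriv_le (F := F) (F' := P)
    (bound := fun _ => M) (s := Icc (z - 1) (z + 1))
    (Icc_mem_nhds (by linarith) (by linarith)) ?_ ?_ ?_ ?_ ?_ ?_).2
  · exact Eventually.of_forall fun z => (hFz z).aestronglyMeasurable
  · exact integrable_of_compact_support hK hν (hFz z)
  · exact (hPz z).aestronglyMeasurable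
  · filter_upwards [hν] with v hv x hx using hM (x, v) ⟨hx, hv⟩
  · exact integrable_const M
  · exact ae_of_all _ fun v x _ => hd x v

lemma sq_integral_le (hK : IsCompact K) (hν : ∀ᵐ v ∂ν, v ∈ K)
    {g : (Fin n → ℝ) → ℝ} (hg : Continuous g) : (∫ v, g v ∂ν) ^ 2 ≤ ∫ v, g v ^ 2 ∂ν := by
  have I : ∀ {h : (Fin n → ℝ) → ℝ}, Continuous h → Integrable h ν :=
    fun h => integrable_of_compact_support hK hν h
  have h0 : 0 ≤ ∫ v, (g v - ∫ w, g w ∂ν) ^ 2 ∂ν := integral_nonneg fun v => sq_nonneg _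
  have e : ∀ v, (g v - ∫ w, g w ∂ν) ^ 2
      = g v ^ 2 - 2 * (∫ w, g w ∂ν) * g v + (∫ w, g w ∂ν) ^ 2 := fun v => by ring
  simp_rw [e] at h0
  rw [integral_add (I (by fun_prop)) (I (by fun_prop)),
    integral_sub (I (by fun_prop)) (I (by fun_prop)), integral_const_mul, integral_const] at h0
  simp at h0
  nlinarith

/-- Weighted Hardy inequality along the stick. `W z = Var_ν (F z ·)` vanishes to second order at
`z = 1`, and `Var_ν (∂F + F / (1 - z)) ≥ 0` reads
`Var_ν ∂F + W' / (1 - z) + W / (1 - z)² ≥ 0`: this completes the square around the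
extremal profile `F ∝ 1 - z`. Stein's identity for `W / (1 - z)` then gives the claim. -/
lemma beta_hardy (hK : IsCompact K) (hν : ∀ᵐ v ∂ν, v ∈ K) {a b : ℝ} (hb : 0 < b) (ha : 0 < a)
    {F P Q : ℝ → (Fin n → ℝ) → ℝ} (hF : Continuous (Function.uncurry F))
    (hP : Continuous (Function.uncurry P)) (hQ : Continuous (Function.uncurry Q))
    (hd : ∀ z v, HasDerivAt (fun z => F z v) (P z v) z) (h1 : ∀ v, F 1 v = 0)
    (hW : ∀ z, a * ((∫ v, F z v ^ 2 ∂ν) - (∫ v, F z v ∂ν) ^ 2) ≤ (1 - z) ^ 2 * ∫ v, Q z v ∂ν) :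
    b * ∫ z, ((∫ v, F z v ^ 2 ∂ν) - (∫ v, F z v ∂ν) ^ 2) ∂betaMeasure b a
      ≤ ∫ z, z * (1 - z) * (((∫ v, P z v ^ 2 ∂ν) - (∫ v, P z v ∂ν) ^ 2) + ∫ v, Q z v ∂ν)
        ∂betaMeasure b a := by
  have I : ∀ {h : (Fin n → ℝ) → ℝ}, Continuous h → Integrable h ν :=
    fun h => integrable_of_compact_support hK hν h
  have Fz : ∀ z, Continuous (F z) := fun z => hF.comp (by fun_prop : Continuous fun v => (z, v))
  have Pz : ∀ z, Continuous (P z) := fun z => hP.comp (by fun_prop : Continuous fun v => (z, v))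
  have hF2 : Continuous (Function.uncurry fun z v => F z v ^ 2) := hF.pow 2
  have hP2 : Continuous (Function.uncurry fun z v => P z v ^ 2) := hP.pow 2
  have hFP : Continuous (Function.uncurry fun z v => F z v * P z v) := hF.mul hP
  have hFP2 : Continuous (Function.uncurry fun z v => 2 * (F z v * P z v)) :=
    continuous_const.mul (hF.mul hP)
  set m : ℝ → ℝ := fun z => ∫ v, F z v ∂ν with hm
  set q : ℝ → ℝ := fun z => ∫ v, F z v ^ 2 ∂ν with hq
  set m' : ℝ → ℝ := fun z => ∫ v, P z v ∂ν with hm'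
  set p : ℝ → ℝ := fun z => ∫ v, P z v ^ 2 ∂ν with hp
  set r : ℝ → ℝ := fun z => ∫ v, F z v * P z v ∂ν with hr
  set S : ℝ → ℝ := fun z => ∫ v, Q z v ∂ν with hS
  have cm : Continuous m := continuous_fibre_integral hK hν hF
  have cq : Continuous q := continuous_fibre_integral hK hν hF2
  have cm' : Continuous m' := continuous_fibre_integral hK hν hP
  have cp : Continuous p := continuous_fibre_integral hK hν hP2
  have cr : Continuous r := continuous_fibre_integral hK hν hFP
  have cS : Continuous S := continuous_fibre_integral hK hν hQ
  have dm : ∀ z, HasDerivAt m (m' z) z := hasDerivAt_fibre_integral hK hν hF hP hd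
  have dq : ∀ z, HasDerivAt q (2 * r z) z := by
    intro z
    have := hasDerivAt_fibre_integral hK hν hF2 hFP2
      (fun z v => ((hd z v).pow 2).congr_deriv (by push_cast; ring)) z
    rwa [integral_const_mul] at this
  set W : ℝ → ℝ := fun z => q z - m z ^ 2 with hWd
  set W' : ℝ → ℝ := fun z => 2 * r z - 2 * m z * m' z with hW'
  have cW : Continuous W := by fun_prop
  have cW' : Continuous W' := by fun_prop
  have dW : ∀ z, HasDerivAt W (W' z) z := fun z =>
    ((dq z).sub ((dm z).pow 2)).congr_deriv (by simp only [hW']; push_cast; ring)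
  -- `F = O(1 - z)` makes `W = O((1 - z)²)`, so `W / (1 - z)` is admissible in Stein's identity
  obtain ⟨M, hM⟩ := ((isCompact_Icc (a := (0 : ℝ)) (b := 1)).prod hK).exists_bound_of_continuousOn
    hP.continuousOn
  have hPM : ∀ z ∈ Ioo (0 : ℝ) 1, ∀ v ∈ K, |P z v| ≤ M := fun z hz v hv =>
    hM (z, v) ⟨Ioo_subset_Icc_self hz, hv⟩
  have hFM : ∀ z ∈ Ioo (0 : ℝ) 1, ∀ v ∈ K, |F z v| ≤ M * (1 - z) := by
    intro z hz v hv
    have := (convex_Icc (0 : ℝ) 1).norm_image_sub_le_of_norm_hasDerivWithin_le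
      (f := fun z => F z v) (f' := fun z => P z v) (C := M) (x := 1) (y := z)
      (fun x _ => (hd x v).hasDerivWithinAt) (fun x hx => hM (x, v) ⟨hx, hv⟩)
      (by simp) (Ioo_subset_Icc_self hz)
    rw [h1 v, sub_zero, Real.norm_eq_abs, Real.norm_eq_abs, abs_sub_comm,
      abs_of_pos (sub_pos.2 hz.2)] at this
    exact this
  have bd : ∀ {g : (Fin n → ℝ) → ℝ} {C : ℝ}, (∀ v ∈ K, |g v| ≤ C) → |∫ v, g v ∂ν| ≤ C := by
    intro g C h
    have := norm_integral_le_of_norm_le_const (μ := ν) (f := g) (C := C)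
      (by filter_upwards [hν] with v hv using h v hv)
    simpa using this
  have hWb : ∀ z ∈ Ioo (0 : ℝ) 1, |W z| ≤ 2 * M ^ 2 * (1 - z) ^ 2 := by
    intro z hz
    have b1 : |m z| ≤ M * (1 - z) := bd (hFM z hz)
    have b2 : |q z| ≤ (M * (1 - z)) ^ 2 := bd fun v hv => by
      rw [abs_pow]; exact pow_le_pow_left₀ (abs_nonneg _) (hFM z hz v hv) 2
    have b3 : m z ^ 2 ≤ (M * (1 - z)) ^ 2 := by
      rw [← sq_abs]; exact pow_le_pow_left₀ (abs_nonneg _) b1 2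
    rw [abs_le] at b2 ⊢
    simp only [hWd]
    constructor <;> nlinarith [sq_nonneg (m z)]
  have hW'b : ∀ z ∈ Ioo (0 : ℝ) 1, |W' z| ≤ 4 * M ^ 2 * (1 - z) := by
    intro z hz
    have b1 : |m z| ≤ M * (1 - z) := bd (hFM z hz)
    have b2 : |m' z| ≤ M := bd (hPM z hz)
    have b3 : |r z| ≤ M * (1 - z) * M := bd fun v hv => by
      rw [abs_mul]
      exact mul_le_mul (hFM z hz v hv) (hPM z hz v hv) (abs_nonneg _)
        ((abs_nonneg _).trans (hFM z hz v hv))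
    have b4 : |m z * m' z| ≤ M * (1 - z) * M := by
      rw [abs_mul]; exact mul_le_mul b1 b2 (abs_nonneg _) ((abs_nonneg _).trans b1)
    rw [abs_le] at b3 b4 ⊢
    simp only [hW']
    constructor <;> nlinarith
  obtain ⟨hint, stein⟩ := beta_stein hb ha (H := fun z => W z / (1 - z))
    (H' := fun z => W' z / (1 - z) + W z / (1 - z) ^ 2) (M := 6 * M ^ 2)
    (by
      intro z hz
      have hz1 : 1 - z ≠ 0 := (sub_pos.2 hz.2).ne'
      refine ((dW z).div ((hasDerivAt_id z).const_sub 1) hz1).congr_deriv ?_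
      simp only [id]
      field_simp
      ring)
    (by
      have h0 : ∀ z ∈ Ioo (0 : ℝ) 1, 1 - z ≠ 0 := fun z hz => (sub_pos.2 hz.2).ne'
      exact (cW'.continuousOn.div (by fun_prop) h0).add
        (cW.continuousOn.div (by fun_prop) fun z hz => pow_ne_zero 2 (h0 z hz)))
    (by
      intro z hz
      have hz1 : 0 < 1 - z := sub_pos.2 hz.2
      rw [abs_div, abs_of_pos hz1, div_le_iff₀ hz1]
      have := hWb z hz
      have h2 : (1 - z) ^ 2 ≤ 1 - z := by nlinarith [hz.1]
      have h3 := mul_le_mul_of_nonneg_left h2 (sq_nonneg M)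
      nlinarith [mul_nonneg (sq_nonneg M) hz1.le])
    (by
      intro z hz
      have hz1 : 0 < 1 - z := sub_pos.2 hz.2
      refine (abs_add_le _ _).trans ?_
      have h1 : |W' z / (1 - z)| ≤ 4 * M ^ 2 := by
        rw [abs_div, abs_of_pos hz1, div_le_iff₀ hz1]; exact hW'b z hz
      have h2 : |W z / (1 - z) ^ 2| ≤ 2 * M ^ 2 := by
        rw [abs_div, abs_of_pos (pow_pos hz1 2), div_le_iff₀ (pow_pos hz1 2)]; exact hWb z hz
      linarith)
  -- `Var_ν (P + F / (1 - z)) ≥ 0`, expanded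
  have square : ∀ z ∈ Ioo (0 : ℝ) 1,
      0 ≤ (p z - m' z ^ 2) + W' z / (1 - z) + W z / (1 - z) ^ 2 := by
    intro z hz
    have hz1 : 1 - z ≠ 0 := (sub_pos.2 hz.2).ne'
    have := sq_integral_le hK hν (g := fun v => P z v + (1 - z)⁻¹ * F z v)
      ((Pz z).add (continuous_const.mul (Fz z)))
    have e : ∀ v, (P z v + (1 - z)⁻¹ * F z v) ^ 2 = P z v ^ 2
        + (2 * (1 - z)⁻¹ * (F z v * P z v) + (1 - z)⁻¹ ^ 2 * F z v ^ 2) := fun v => by ring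
    simp_rw [e] at this
    have c1 := Fz z
    have c2 := Pz z
    rw [integral_add (I c2) (I (by fun_prop)), integral_add (I (by fun_prop)) (I (by fun_prop)),
      integral_add (I (by fun_prop)) (I (by fun_prop)), integral_const_mul, integral_const_mul,
      integral_const_mul] at this
    have e2 : (p z - m' z ^ 2) + W' z / (1 - z) + W z / (1 - z) ^ 2
        = (p z + (2 * (1 - z)⁻¹ * r z + (1 - z)⁻¹ ^ 2 * q z)) - (m' z + (1 - z)⁻¹ * m z) ^ 2 := by
      simp only [hW', hWd]
      field_simp
      ring
    rw [e2]
    exact sub_nonneg.2 this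
  have IB : ∀ {h : ℝ → ℝ}, Continuous h → Integrable h (betaMeasure b a) :=
    fun h => integrable_beta_of_continuous hb ha h
  have : b * ∫ z, W z ∂betaMeasure b a
      = ∫ z, (b * W z - ((b - (a + b) * z) * (W z / (1 - z))
        + z * (1 - z) * (W' z / (1 - z) + W z / (1 - z) ^ 2))) ∂betaMeasure b a := by
    rw [integral_sub (IB (by fun_prop)) hint, stein, sub_zero, integral_const_mul]
  change b * ∫ z, W z ∂betaMeasure b a ≤ _
  rw [this]
  change _ ≤ ∫ z, z * (1 - z) * ((p z - m' z ^ 2) + S z) ∂betaMeasure b a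
  refine integral_mono_ae ((IB (by fun_prop)).sub hint) (IB (by fun_prop)) ?_
  filter_upwards [ae_beta_mem b a] with z hz
  have hz1 : 0 < 1 - z := sub_pos.2 hz.2
  have hz0 := hz.1
  have e : b * W z - ((b - (a + b) * z) * (W z / (1 - z))
        + z * (1 - z) * (W' z / (1 - z) + W z / (1 - z) ^ 2))
      = z * (a * W z / (1 - z)) - z * (1 - z) * (W' z / (1 - z) + W z / (1 - z) ^ 2) := by
    field_simp
    ring
  have h2 : a * W z / (1 - z) ≤ (1 - z) * S z := by
    rw [div_le_iff₀ hz1]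
    have : a * W z ≤ (1 - z) ^ 2 * S z := hW z
    linarith
  have h3 := mul_le_mul_of_nonneg_left h2 hz0.le
  have h4 := mul_nonneg (mul_pos hz0 hz1).le (square z hz)
  rw [e]
  linarith

/-- One stick-breaking step. For `z` beta distributed and `v` independent of law `ν`, the variance
of `F z v` splits into the variance of the fibre mean, controlled by `beta_poincare`, and the mean
fibre variance, controlled by `beta_hardy`. -/
lemma stick_step (hK : IsCompact K) (hν : ∀ᵐ v ∂ν, v ∈ K) {a b : ℝ} (hb : 0 < b) (ha : 0 < a)
    {F P Q : ℝ → (Fin n → ℝ) → ℝ} (hF : Continuous (Function.uncurry F))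
    (hP : Continuous (Function.uncurry P)) (hQ : Continuous (Function.uncurry Q))
    (hd : ∀ z v, HasDerivAt (fun z => F z v) (P z v) z) (c : ℝ) (h1 : ∀ v, F 1 v = c)
    (hW : ∀ z, a * ((∫ v, F z v ^ 2 ∂ν) - (∫ v, F z v ∂ν) ^ 2) ≤ (1 - z) ^ 2 * ∫ v, Q z v ∂ν) :
    (a + b) * ((∫ z, (∫ v, F z v ∂ν) ^ 2 ∂betaMeasure b a)
        - (∫ z, ∫ v, F z v ∂ν ∂betaMeasure b a) ^ 2)
      + b * ∫ z, ((∫ v, F z v ^ 2 ∂ν) - (∫ v, F z v ∂ν) ^ 2) ∂betaMeasure b a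
      ≤ ∫ z, z * (1 - z) * ((∫ v, P z v ^ 2 ∂ν) + ∫ v, Q z v ∂ν) ∂betaMeasure b a := by
  have I : ∀ {h : (Fin n → ℝ) → ℝ}, Continuous h → Integrable h ν :=
    fun h => integrable_of_compact_support hK hν h
  have IB : ∀ {h : ℝ → ℝ}, Continuous h → Integrable h (betaMeasure b a) :=
    fun h => integrable_beta_of_continuous hb ha h
  have Fz : ∀ z, Continuous (F z) := fun z => hF.comp (by fun_prop : Continuous fun v => (z, v))
  have cm' : Continuous fun z => ∫ v, P z v ∂ν := continuous_fibre_integral hK hν hP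
  have cp : Continuous fun z => ∫ v, P z v ^ 2 ∂ν := continuous_fibre_integral hK hν (hP.pow 2)
  have cS : Continuous fun z => ∫ v, Q z v ∂ν := continuous_fibre_integral hK hν hQ
  have shift : ∀ z, (∫ v, (F z v - c) ^ 2 ∂ν) - (∫ v, (F z v - c) ∂ν) ^ 2
      = (∫ v, F z v ^ 2 ∂ν) - (∫ v, F z v ∂ν) ^ 2 := by
    intro z
    have c1 := Fz z
    have e : ∀ v, (F z v - c) ^ 2 = F z v ^ 2 - 2 * c * F z v + c ^ 2 := fun v => by ring
    simp_rw [e]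
    rw [integral_add (I (by fun_prop)) (I (by fun_prop)),
      integral_sub (I (by fun_prop)) (I (by fun_prop)), integral_sub (I c1) (I (by fun_prop)),
      integral_const_mul, integral_const, integral_const]
    simp
    ring
  have A := beta_hardy hK hν hb ha (F := fun z v => F z v - c) (hF.sub continuous_const) hP hQ
    (fun z v => (hd z v).sub_const c) (fun v => by simp [h1 v])
    (fun z => by rw [shift]; exact hW z)
  simp_rw [shift] at A
  have B := beta_poincare hb ha (hasDerivAt_fibre_integral hK hν hF hP hd) cm'
  refine (add_le_add B A).trans_eq ?_
  rw [← integral_add (IB (by fun_prop)) (IB (by fun_prop))]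
  congr 1
  ext z
  ring

end Fibre

/-! ### Stick-breaking of the Dirichlet distribution -/

lemma isCompact_simplex (n : ℕ) : IsCompact (simplex n) := by
  have hc : IsClosed (simplex n) := by
    have e : simplex n = (⋂ i, {x : Fin n → ℝ | 0 ≤ x i} ∩ {x | x i ≤ 1}) ∩ {x | ∑ i, x i ≤ 1} := by
      ext x; simp [simplex]
    rw [e]
    refine (isClosed_iInter fun i => ?_).inter ?_
    · exact (isClosed_le continuous_const (continuous_apply i)).inter
        (isClosed_le (continuous_apply i) continuous_const)
    · exact isClosed_le (by fun_prop) continuous_const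
  refine (isCompact_univ_pi fun _ : Fin n => isCompact_Icc (a := (0 : ℝ)) (b := 1)).of_isClosed_subset
    hc fun x hx i _ => hx.1 i

lemma measurable_dirichletDensity (n : ℕ) (α : Fin (n + 1) → ℝ) :
    Measurable (dirichletDensity n α) := by
  change Measurable fun x : Fin n → ℝ => (Real.Gamma (∑ k, α k) / ∏ k, Real.Gamma (α k)) *
    (1 - ∑ i, x i) ^ (α (Fin.last n) - 1) * ∏ i, x i ^ (α (Fin.castSucc i) - 1)
  fun_prop

/-- The Dirichlet density extended by zero outside the simplex. -/
def dirichletPDF (n : ℕ) (α : Fin (n + 1) → ℝ) : (Fin n → ℝ) → ENNReal :=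
  (simplex n).indicator fun x => ENNReal.ofReal (dirichletDensity n α x)

lemma measurable_dirichletPDF (n : ℕ) (α : Fin (n + 1) → ℝ) : Measurable (dirichletPDF n α) :=
  (measurable_dirichletDensity n α).ennreal_ofReal.indicator
    (isCompact_simplex n).isClosed.measurableSet

lemma dirichlet_eq (n : ℕ) (α : Fin (n + 1) → ℝ) :
    dirichlet n α = volume.withDensity (dirichletPDF n α) := by
  rw [dirichletPDF, withDensity_indicator (isCompact_simplex n).isClosed.measurableSet, dirichlet]

instance (n : ℕ) (α : Fin (n + 1) → ℝ) : SFinite (dirichlet n α) := by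
  rw [dirichlet_eq]; infer_instance

instance (a b : ℝ) : SFinite (betaMeasure a b) := by
  rw [betaMeasure]; infer_instance

lemma ae_dirichlet_mem (n : ℕ) (α : Fin (n + 1) → ℝ) : ∀ᵐ x ∂dirichlet n α, x ∈ simplex n := by
  rw [dirichlet_eq, ae_withDensity_iff (measurable_dirichletPDF n α)]
  refine ae_of_all _ fun x hx => ?_
  by_contra h
  exact hx (indicator_of_notMem h _)

/-- The stick-breaking map: `z` is the first coordinate and `v` the proportions of the rest. -/
def stick (n : ℕ) (p : ℝ × (Fin n → ℝ)) : Fin (n + 1) → ℝ :=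
  Fin.cons p.1 ((1 - p.1) • p.2)

lemma continuous_cons (n : ℕ) :
    Continuous fun p : ℝ × (Fin n → ℝ) => (Fin.cons p.1 p.2 : Fin (n + 1) → ℝ) := by
  refine continuous_pi fun i => ?_
  refine Fin.cases ?_ (fun i => ?_) i
  · simpa using continuous_fst
  · simp only [Fin.cons_succ]
    fun_prop

lemma continuous_stick (n : ℕ) : Continuous (stick n) :=
  (continuous_cons n).comp
    (by fun_prop : Continuous fun p : ℝ × (Fin n → ℝ) => (p.1, (1 - p.1) • p.2))

lemma lintegral_smul_pi (n : ℕ) {r : ℝ} (hr : 0 < r) {g : (Fin n → ℝ) → ENNReal}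
    (hg : Measurable g) :
    ∫⁻ w, g w = ∫⁻ v, ENNReal.ofReal (r ^ n) * g (r • v) := by
  have h := congrArg (fun μ => ∫⁻ w, g w ∂μ)
    (Measure.map_addHaar_smul (volume : Measure (Fin n → ℝ)) hr.ne')
  rw [lintegral_map hg (by fun_prop), lintegral_smul_measure, Module.finrank_fin_fun,
    abs_of_pos (inv_pos.2 (pow_pos hr n))] at h
  have mg : Measurable fun v : Fin n → ℝ => g (r • v) := hg.comp (by fun_prop)
  rw [lintegral_const_mul _ mg, h, smul_eq_mul, ← mul_assoc,
    ← ENNReal.ofReal_mul (pow_pos hr n).le, mul_inv_cancel₀ (pow_pos hr n).ne']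
  simp

lemma stick_mem_iff (n : ℕ) {z : ℝ} (hz : z ∈ Ioo (0 : ℝ) 1) (v : Fin n → ℝ) :
    stick n (z, v) ∈ simplex (n + 1) ↔ v ∈ simplex n := by
  have hz1 : 0 < 1 - z := sub_pos.2 hz.2
  simp only [simplex, mem_ofPred_eq, stick, Fin.forall_fin_succ, Fin.sum_univ_succ, Fin.cons_zero,
    Fin.cons_succ, Pi.smul_apply, smul_eq_mul, ← Finset.mul_sum]
  constructor
  · rintro ⟨⟨_, h⟩, h3⟩
    have hs : ∑ i, v i ≤ 1 := by
      by_contra! hh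
      nlinarith
    have h0 : ∀ i, 0 ≤ v i := fun i => nonneg_of_mul_nonneg_right (h i).1 hz1
    exact ⟨fun i => ⟨h0 i, (Finset.single_le_sum (fun j _ => h0 j) (Finset.mem_univ i)).trans hs⟩,
      hs⟩
  · rintro ⟨h, hs⟩
    refine ⟨⟨⟨hz.1.le, hz.2.le⟩, fun i => ⟨mul_nonneg hz1.le (h i).1, ?_⟩⟩, ?_⟩
    · nlinarith [(h i).1, (h i).2, hz.1]
    · nlinarith

lemma dirichletDensity_stick (n : ℕ) {α : Fin (n + 2) → ℝ} (hα : ∀ k, 0 < α k) {z : ℝ}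
    (hz : z ∈ Ioo (0 : ℝ) 1) {v : Fin n → ℝ} (hv : v ∈ simplex n) :
    (1 - z) ^ n * dirichletDensity (n + 1) α (stick n (z, v))
      = betaPDFReal (α 0) (∑ k : Fin (n + 1), α k.succ) z
        * dirichletDensity n (fun k => α k.succ) v := by
  have hz1 : 0 < 1 - z := sub_pos.2 hz.2
  have ha : 0 < ∑ k : Fin (n + 1), α k.succ :=
    Finset.sum_pos (fun k _ => hα _) Finset.univ_nonempty
  have hG := (Real.Gamma_pos_of_pos ha).ne'
  have key : (1 - z) ^ (∑ k : Fin (n + 1), α k.succ - 1)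
      = (1 - z) ^ n * (1 - z) ^ (α (Fin.last (n + 1)) - 1)
        * ∏ i : Fin n, (1 - z) ^ (α i.castSucc.succ - 1) := by
    rw [← Real.rpow_sum_of_pos hz1, ← Real.rpow_natCast, ← Real.rpow_add hz1, ← Real.rpow_add hz1,
      Fin.sum_univ_castSucc, Finset.sum_sub_distrib, Fin.succ_last]
    congr 1
    simp
    ring
  have hsum : ∑ k : Fin (n + 2), α k = α 0 + ∑ k : Fin (n + 1), α k.succ := Fin.sum_univ_succ _
  have hprod : ∏ k : Fin (n + 2), Real.Gamma (α k)
      = Real.Gamma (α 0) * ∏ k : Fin (n + 1), Real.Gamma (α k.succ) := Fin.prod_univ_succ _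
  have hs : 1 - ∑ i, stick n (z, v) i = (1 - z) * (1 - ∑ i, v i) := by
    rw [Fin.sum_univ_succ]
    simp only [stick, Fin.cons_zero, Fin.cons_succ, Pi.smul_apply, smul_eq_mul, ← Finset.mul_sum]
    ring
  have hp : ∏ i : Fin (n + 1), stick n (z, v) i ^ (α i.castSucc - 1)
      = z ^ (α 0 - 1) * ((∏ i : Fin n, (1 - z) ^ (α i.castSucc.succ - 1))
        * ∏ i : Fin n, v i ^ (α i.castSucc.succ - 1)) := by
    rw [Fin.prod_univ_succ, ← Finset.prod_mul_distrib]
    refine congrArg₂ _ rfl (Finset.prod_congr rfl fun i _ => ?_)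
    simp only [stick, Fin.cons_succ, Pi.smul_apply, smul_eq_mul, ← Fin.succ_castSucc]
    exact Real.mul_rpow hz1.le (hv.1 i).1
  rw [betaPDFReal, if_pos (And.intro hz.1 hz.2), key, beta]
  simp only [dirichletDensity, Real.rpow_eq_pow]
  rw [hsum, hprod, hs, hp, Real.mul_rpow hz1.le (sub_nonneg.2 hv.2), Fin.succ_last]
  have hP : ∏ k : Fin (n + 1), Real.Gamma (α k.succ) ≠ 0 :=
    Finset.prod_ne_zero_iff.2 fun k _ => (Real.Gamma_pos_of_pos (hα _)).ne'
  have hG0 := (Real.Gamma_pos_of_pos (hα 0)).ne'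
  have hGs := (Real.Gamma_pos_of_pos (add_pos (hα 0) ha)).ne'
  generalize ∑ k : Fin (n + 1), α k.succ = a at *
  field_simp

/-- Stick-breaking: the first coordinate is beta distributed and independent of the proportions of
the remaining ones, which are again Dirichlet distributed. -/
lemma dirichlet_succ (n : ℕ) {α : Fin (n + 2) → ℝ} (hα : ∀ k, 0 < α k) :
    dirichlet (n + 1) α = ((betaMeasure (α 0) (∑ k : Fin (n + 1), α k.succ)).prod
      (dirichlet n fun k => α k.succ)).map (stick n) := by
  set a := ∑ k : Fin (n + 1), α k.succ with hadef
  have ha : 0 < a := Finset.sum_pos (fun k _ => hα _) Finset.univ_nonempty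
  refine Measure.ext_of_lintegral _ fun f hf => ?_
  have mD := measurable_dirichletPDF (n + 1) α
  have mD' := measurable_dirichletPDF n fun k => α k.succ
  have ms : Measurable (stick n) := (continuous_stick n).measurable
  have mc := (continuous_cons n).measurable
  have hR : ∫⁻ x, f x ∂((betaMeasure (α 0) a).prod (dirichlet n fun k => α k.succ)).map (stick n)
      = ∫⁻ z, ∫⁻ v, betaPDF (α 0) a z * (dirichletPDF n (fun k => α k.succ) v * f (stick n (z, v))) := by
    have m0 : Measurable fun p => f (stick n p) := hf.comp ms
    rw [lintegral_map hf ms, lintegral_prod _ m0.aemeasurable, betaMeasure, dirichlet_eq,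
      lintegral_withDensity_eq_lintegral_mul _ (measurable_betaPDF _ _)]
    · refine lintegral_congr fun z => ?_
      have m1 : Measurable fun v => f (stick n (z, v)) := hf.comp (ms.comp (by fun_prop))
      rw [Pi.mul_apply, lintegral_withDensity_eq_lintegral_mul _ mD' m1,
        ← lintegral_const_mul _ (mD'.mul m1)]
      rfl
    · rw [← dirichlet_eq]
      exact m0.lintegral_prod_right'
  have hL : ∫⁻ x, f x ∂dirichlet (n + 1) α
      = ∫⁻ z, ∫⁻ w, dirichletPDF (n + 1) α (Fin.cons z w) * f (Fin.cons z w) := by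
    rw [dirichlet_eq, lintegral_withDensity_eq_lintegral_mul _ mD hf,
      ← (volume_preserving_piFinSuccAbove (fun _ : Fin (n + 1) => ℝ) 0).symm.lintegral_comp
        (mD.mul hf), Measure.volume_eq_prod, lintegral_prod]
    · refine lintegral_congr fun z => lintegral_congr fun w => ?_
      have e : (MeasurableEquiv.piFinSuccAbove (fun _ : Fin (n + 1) => ℝ) 0).symm (z, w)
          = Fin.cons z w := by
        simp [MeasurableEquiv.piFinSuccAbove, Fin.insertNthEquiv]
      rw [e]
      rfl
    · exact ((mD.mul hf).comp (MeasurableEquiv.measurable _)).aemeasurable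
  rw [hL, hR]
  refine lintegral_congr_ae ?_
  have n0 : ∀ᵐ z : ℝ, z ≠ 0 := by simp [ae_iff, measure_singleton]
  have n1 : ∀ᵐ z : ℝ, z ≠ 1 := by simp [ae_iff, measure_singleton]
  filter_upwards [n0, n1] with z hz0 hz1
  by_cases hz : z ∈ Ioo (0 : ℝ) 1
  · have hzp : 0 < 1 - z := sub_pos.2 hz.2
    rw [lintegral_smul_pi n hzp
      (g := fun w => dirichletPDF (n + 1) α (Fin.cons z w) * f (Fin.cons z w))
      ((mD.mul hf).comp (mc.comp (by fun_prop : Measurable fun w => (z, w))))]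
    refine lintegral_congr fun v => ?_
    change ENNReal.ofReal ((1 - z) ^ n) * (dirichletPDF (n + 1) α (stick n (z, v))
      * f (stick n (z, v))) = _
    rw [← mul_assoc, ← mul_assoc]
    congr 1
    by_cases hv : v ∈ simplex n
    · rw [dirichletPDF, dirichletPDF, indicator_of_mem hv,
        indicator_of_mem ((stick_mem_iff n hz v).2 hv), betaPDF,
        ← ENNReal.ofReal_mul (pow_pos hzp n).le,
        ← ENNReal.ofReal_mul (betaPDFReal_nonneg (hα 0) ha z), dirichletDensity_stick n hα hz hv]
    · rw [dirichletPDF, dirichletPDF, indicator_of_notMem hv,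
        indicator_of_notMem (mt (stick_mem_iff n hz v).1 hv), mul_zero, mul_zero]
  · have h1 : betaPDF (α 0) a z = 0 := by
      rw [betaPDF_eq]; exact (congrArg _ (if_neg hz)).trans ENNReal.ofReal_zero
    have h2 : ∀ w : Fin n → ℝ, dirichletPDF (n + 1) α (Fin.cons z w) = 0 := by
      intro w
      refine indicator_of_notMem (fun h => hz ?_) _
      have := h.1 0
      simp only [Fin.cons_zero] at this
      exact ⟨lt_of_le_of_ne this.1 hz0.symm, lt_of_le_of_ne this.2 hz1⟩
    simp [h1, h2]

lemma isProbabilityMeasure_dirichlet (n : ℕ) :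
    ∀ {α : Fin (n + 1) → ℝ}, (∀ k, 0 < α k) → IsProbabilityMeasure (dirichlet n α) := by
  induction n with
  | zero =>
    intro α hα
    constructor
    have h : ∀ x, dirichletPDF 0 α x = 1 := by
      intro x
      have hx : x ∈ simplex 0 := ⟨fun i => i.elim0, by simp⟩
      rw [dirichletPDF, indicator_of_mem hx]
      simp [dirichletDensity, (Real.Gamma_pos_of_pos (hα 0)).ne']
    rw [dirichlet_eq, withDensity_apply _ MeasurableSet.univ]
    simp [h, volume_pi]
  | succ n ih =>
    intro α hα
    have := ih fun k => hα k.succ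
    have := isProbabilityMeasureBeta (hα 0)
      (Finset.sum_pos (fun k _ => hα k.succ) (Finset.univ_nonempty (α := Fin (n + 1))))
    rw [dirichlet_succ n hα]
    exact Measure.isProbabilityMeasure_map (continuous_stick n).aemeasurable

/-- Stick-breaking for integrals of continuous functions. -/
lemma integral_dirichlet_succ (n : ℕ) {α : Fin (n + 2) → ℝ} (hα : ∀ k, 0 < α k)
    {g : (Fin (n + 1) → ℝ) → ℝ} (hg : Continuous g) :
    ∫ x, g x ∂dirichlet (n + 1) α = ∫ z, ∫ v, g (stick n (z, v)) ∂dirichlet n (fun k => α k.succ)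
      ∂betaMeasure (α 0) (∑ k : Fin (n + 1), α k.succ) := by
  have h := dirichlet_succ n hα
  have := isProbabilityMeasure_dirichlet n fun k => hα k.succ
  have hi : Integrable g (dirichlet (n + 1) α) :=
    have := isProbabilityMeasure_dirichlet (n + 1) hα
    integrable_of_compact_support (isCompact_simplex (n + 1)) (ae_dirichlet_mem (n + 1) α) hg
  have ms := (continuous_stick n).aemeasurable (μ := (betaMeasure (α 0)
    (∑ k : Fin (n + 1), α k.succ)).prod (dirichlet n fun k => α k.succ))
  rw [h, integrable_map_measure hg.aestronglyMeasurable ms] at hi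
  rw [h, integral_map ms hg.aestronglyMeasurable]
  exact integral_prod _ hi

/-! ### Energies along the stick -/

lemma fderiv_eq_sum_pd (N : ℕ) (f : (Fin N → ℝ) → ℝ) (x w : Fin N → ℝ) :
    fderiv ℝ f x w = ∑ i, w i * pd N i f x := by
  conv_lhs => rw [← Finset.univ_sum_single w]
  rw [map_sum]
  refine Finset.sum_congr rfl fun i _ => ?_
  have : (Pi.single i (w i) : Fin N → ℝ) = w i • Pi.single i 1 := by
    rw [← Pi.single_smul', smul_eq_mul, mul_one]
  rw [this, map_smul, smul_eq_mul, pd]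

lemma continuous_pd {N : ℕ} {f : (Fin N → ℝ) → ℝ} (hf : ContDiff ℝ 1 f) (i : Fin N) :
    Continuous (pd N i f) :=
  (hf.continuous_fderiv one_ne_zero).clm_apply continuous_const

lemma hasDerivAt_comp_pd {N : ℕ} {f : (Fin N → ℝ) → ℝ} (hf : ContDiff ℝ 1 f) {γ : ℝ → Fin N → ℝ}
    {w : Fin N → ℝ} {t : ℝ} (hγ : HasDerivAt γ w t) :
    HasDerivAt (fun t => f (γ t)) (∑ i, w i * pd N i f (γ t)) t := by
  rw [← fderiv_eq_sum_pd]
  exact ((hf.differentiable one_ne_zero) (γ t)).hasFDerivAt.comp_hasDerivAt t hγ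

/-- Partial derivatives of a composition with an affine map: `w` is the increment of `φ` in the
coordinate direction `i`. -/
lemma pd_comp_affine {M N : ℕ} {f : (Fin N → ℝ) → ℝ} (hf : ContDiff ℝ 1 f)
    {φ : (Fin M → ℝ) → Fin N → ℝ} (hφ : Differentiable ℝ φ) (i : Fin M) {w : Fin N → ℝ}
    (x : Fin M → ℝ) (h : ∀ t : ℝ, φ (x + t • Pi.single i 1) = φ x + t • w) :
    pd M i (fun y => f (φ y)) x = ∑ j, w j * pd N j f (φ x) := by
  have hd : DifferentiableAt ℝ (fun y => f (φ y)) x :=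
    ((hf.differentiable one_ne_zero).comp hφ) x
  have h1 : HasDerivAt (fun t : ℝ => x + t • (Pi.single i 1 : Fin M → ℝ)) (Pi.single i 1) 0 := by
    simpa using ((hasDerivAt_id (0 : ℝ)).smul_const (Pi.single i 1 : Fin M → ℝ)).const_add x
  have e0 : x + (0 : ℝ) • (Pi.single i 1 : Fin M → ℝ) = x := by simp
  have h2 : HasDerivAt (fun t : ℝ => f (φ (x + t • (Pi.single i 1 : Fin M → ℝ))))
      (pd M i (fun y => f (φ y)) x) 0 := by
    have hd' : HasFDerivAt (fun y => f (φ y)) (fderiv ℝ (fun y => f (φ y)) x)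
        (x + (0 : ℝ) • (Pi.single i 1 : Fin M → ℝ)) := by rw [e0]; exact hd.hasFDerivAt
    exact hd'.comp_hasDerivAt 0 h1
  have h3 : HasDerivAt (fun t : ℝ => φ x + t • w) w 0 := by
    simpa using ((hasDerivAt_id (0 : ℝ)).smul_const w).const_add (φ x)
  have h4 := hasDerivAt_comp_pd hf h3
  simp only [h] at h2
  simpa using h2.unique h4

/-- The energy density `∑ xᵢ (∂ᵢf)² - (∑ xᵢ ∂ᵢf)²` of the Wright–Fisher diffusion, whose spectral
gap under the Dirichlet distribution is `∑ α`. -/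
def wf (n : ℕ) (f : (Fin n → ℝ) → ℝ) (x : Fin n → ℝ) : ℝ :=
  ∑ i, x i * pd n i f x ^ 2 - (∑ i, x i * pd n i f x) ^ 2

section Stick

variable (n : ℕ) {f : (Fin (n + 1) → ℝ) → ℝ}

/-- Derivative of `f` along the stick, at fixed proportions `v`. -/
def stickP (f : (Fin (n + 1) → ℝ) → ℝ) (z : ℝ) (v : Fin n → ℝ) : ℝ :=
  pd (n + 1) 0 f (stick n (z, v)) - ∑ i : Fin n, v i * pd (n + 1) i.succ f (stick n (z, v))

/-- Wright–Fisher energy density in the proportions `v`, before scaling by `(1 - z) ^ 2`. -/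
def stickQ (f : (Fin (n + 1) → ℝ) → ℝ) (z : ℝ) (v : Fin n → ℝ) : ℝ :=
  ∑ i : Fin n, v i * pd (n + 1) i.succ f (stick n (z, v)) ^ 2
    - (∑ i : Fin n, v i * pd (n + 1) i.succ f (stick n (z, v))) ^ 2

lemma continuous_pd_stick (hf : ContDiff ℝ 1 f) (i : Fin (n + 1)) :
    Continuous fun p : ℝ × (Fin n → ℝ) => pd (n + 1) i f (stick n (p.1, p.2)) :=
  (continuous_pd hf i).comp (continuous_stick n)

lemma continuous_stickP (hf : ContDiff ℝ 1 f) : Continuous (Function.uncurry (stickP n f)) := by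
  have := continuous_pd_stick n hf
  unfold Function.uncurry stickP
  fun_prop

lemma continuous_stickQ (hf : ContDiff ℝ 1 f) : Continuous (Function.uncurry (stickQ n f)) := by
  have := continuous_pd_stick n hf
  unfold Function.uncurry stickQ
  fun_prop

lemma hasDerivAt_stick (hf : ContDiff ℝ 1 f) (z : ℝ) (v : Fin n → ℝ) :
    HasDerivAt (fun z => f (stick n (z, v))) (stickP n f z v) z := by
  have h : HasDerivAt (fun z => stick n (z, v)) (Fin.cons 1 (-v) : Fin (n + 1) → ℝ) z := by
    rw [hasDerivAt_pi]
    refine Fin.cases ?_ fun i => ?_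
    · simpa [stick] using hasDerivAt_id' z
    · simpa [stick] using ((hasDerivAt_id z).const_sub 1).mul_const (v i)
  convert hasDerivAt_comp_pd hf h using 1
  rw [Fin.sum_univ_succ]
  simp [stickP, sub_eq_add_neg]

lemma wf_stick (hf : ContDiff ℝ 1 f) (z : ℝ) (v : Fin n → ℝ) :
    wf n (fun v => f (stick n (z, v))) v = (1 - z) ^ 2 * stickQ n f z v := by
  have hφ : Differentiable ℝ fun v => stick n (z, v) := by
    rw [differentiable_pi]
    refine Fin.cases ?_ fun i => ?_
    · simp [stick]
    · simp only [stick, Fin.cons_succ, Pi.smul_apply, smul_eq_mul]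
      fun_prop
  have h : ∀ i, pd n i (fun v => f (stick n (z, v))) v
      = (1 - z) * pd (n + 1) i.succ f (stick n (z, v)) := by
    intro i
    rw [pd_comp_affine hf hφ i (w := (1 - z) • Pi.single i.succ 1) v]
    · simp [Pi.single_apply]
    · intro t
      ext j
      refine Fin.cases ?_ (fun j => ?_) j
      · simp [stick]
      · simp [stick, Pi.single_apply]
        ring_nf
  simp only [wf, h, stickQ]
  rw [mul_sub, Finset.mul_sum, ← mul_pow, Finset.mul_sum]
  congr 1
  · exact Finset.sum_congr rfl fun i _ => by ring
  · congr 1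
    exact Finset.sum_congr rfl fun i _ => by ring

lemma wf_at_stick (z : ℝ) (v : Fin n → ℝ) :
    wf (n + 1) f (stick n (z, v)) = z * (1 - z) * stickP n f z v ^ 2 + (1 - z) * stickQ n f z v := by
  simp only [wf, Fin.sum_univ_succ, stickP, stickQ]
  have e1 : ∑ i : Fin n, stick n (z, v) i.succ * pd (n + 1) i.succ f (stick n (z, v)) ^ 2
      = (1 - z) * ∑ i : Fin n, v i * pd (n + 1) i.succ f (stick n (z, v)) ^ 2 := by
    rw [Finset.mul_sum]
    exact Finset.sum_congr rfl fun i _ => by simp [stick, mul_assoc]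
  have e2 : ∑ i : Fin n, stick n (z, v) i.succ * pd (n + 1) i.succ f (stick n (z, v))
      = (1 - z) * ∑ i : Fin n, v i * pd (n + 1) i.succ f (stick n (z, v)) := by
    rw [Finset.mul_sum]
    exact Finset.sum_congr rfl fun i _ => by simp [stick, mul_assoc]
  have e0 : stick n (z, v) 0 = z := rfl
  rw [e1, e2, e0]
  ring

/-- Energy density of the star centred at vertex `0`: mass moves only between coordinate `0` and
the other ones, the implicit last one `1 - ∑ x` included. -/
def starEnergy (f : (Fin (n + 1) → ℝ) → ℝ) (x : Fin (n + 1) → ℝ) : ℝ :=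
  x 0 * ((1 - ∑ i, x i) * pd (n + 1) 0 f x ^ 2
    + ∑ i : Fin n, x i.succ * (pd (n + 1) i.succ f x - pd (n + 1) 0 f x) ^ 2)

lemma star_at_stick (z : ℝ) (v : Fin n → ℝ) :
    starEnergy n f (stick n (z, v)) = z * (1 - z) * (stickP n f z v ^ 2 + stickQ n f z v) := by
  simp only [starEnergy, Fin.sum_univ_succ, stickP, stickQ]
  set d := fun i => pd (n + 1) i f (stick n (z, v)) with hd
  have e1 : ∑ i : Fin n, stick n (z, v) i.succ * (d i.succ - d 0) ^ 2
      = (1 - z) * (∑ i : Fin n, v i * d i.succ ^ 2 - 2 * d 0 * ∑ i : Fin n, v i * d i.succ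
        + d 0 ^ 2 * ∑ i, v i) := by
    rw [Finset.mul_sum, Finset.mul_sum, ← Finset.sum_sub_distrib, ← Finset.sum_add_distrib,
      Finset.mul_sum]
    exact Finset.sum_congr rfl fun i _ => by simp [stick]; ring
  have e2 : ∑ i : Fin n, stick n (z, v) i.succ = (1 - z) * ∑ i, v i := by
    rw [Finset.mul_sum]; simp [stick]
  have e0 : stick n (z, v) 0 = z := rfl
  simp only [hd] at e1
  rw [e1, e2, e0]
  ring

end Stick

/-! ### Wright–Fisher and star inequalities -/

/-- One stick-breaking step for `f`, given the Wright–Fisher inequality for the proportions. The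
second part is the bound on the fibre variance from which `stick_step` derives the first part. -/
lemma dirichlet_stick_step (n : ℕ) {α : Fin (n + 2) → ℝ} (hα : ∀ k, 0 < α k)
    (ih : ∀ g : (Fin n → ℝ) → ℝ, ContDiff ℝ 1 g →
      (∑ k : Fin (n + 1), α k.succ) * ((∫ v, g v ^ 2 ∂dirichlet n fun k => α k.succ)
        - (∫ v, g v ∂dirichlet n fun k => α k.succ) ^ 2)
        ≤ ∫ v, wf n g v ∂dirichlet n fun k => α k.succ)
    {f : (Fin (n + 1) → ℝ) → ℝ} (hf : ContDiff ℝ 1 f) {ν : Measure (Fin n → ℝ)} {β : Measure ℝ}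
    {a : ℝ} (hν : ν = dirichlet n fun k => α k.succ) (ha : a = ∑ k : Fin (n + 1), α k.succ)
    (hβ : β = betaMeasure (α 0) a) :
    (a + α 0) * ((∫ z, (∫ v, f (stick n (z, v)) ∂ν) ^ 2 ∂β)
        - (∫ z, ∫ v, f (stick n (z, v)) ∂ν ∂β) ^ 2)
      + α 0 * ∫ z, ((∫ v, f (stick n (z, v)) ^ 2 ∂ν) - (∫ v, f (stick n (z, v)) ∂ν) ^ 2) ∂β
      ≤ ∫ z, z * (1 - z) * ((∫ v, stickP n f z v ^ 2 ∂ν) + ∫ v, stickQ n f z v ∂ν) ∂β ∧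
    ∀ z, a * ((∫ v, f (stick n (z, v)) ^ 2 ∂ν) - (∫ v, f (stick n (z, v)) ∂ν) ^ 2)
      ≤ (1 - z) ^ 2 * ∫ v, stickQ n f z v ∂ν := by
  have ha0 : 0 < a := ha ▸ Finset.sum_pos (fun k _ => hα _) Finset.univ_nonempty
  have : IsProbabilityMeasure ν := hν ▸ isProbabilityMeasure_dirichlet n fun k => hα k.succ
  have hmem : ∀ᵐ v ∂ν, v ∈ simplex n := hν ▸ ae_dirichlet_mem n _
  have hW : ∀ z, a * ((∫ v, f (stick n (z, v)) ^ 2 ∂ν) - (∫ v, f (stick n (z, v)) ∂ν) ^ 2)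
      ≤ (1 - z) ^ 2 * ∫ v, stickQ n f z v ∂ν := by
    intro z
    have hg : ContDiff ℝ 1 fun v => f (stick n (z, v)) := by
      refine hf.comp (contDiff_pi.2 (Fin.cases ?_ fun i => ?_))
      · exact contDiff_const
      · simp only [stick, Fin.cons_succ, Pi.smul_apply, smul_eq_mul]
        fun_prop
    have h := ih _ hg
    simp only [wf_stick n hf, integral_const_mul] at h
    rwa [← hν, ← ha] at h
  refine ⟨?_, hW⟩
  have hF : Continuous (Function.uncurry fun z v => f (stick n (z, v))) :=
    hf.continuous.comp (continuous_stick n)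
  subst hβ
  refine stick_step (isCompact_simplex n) hmem (hα 0) ha0 hF (continuous_stickP n hf)
    (continuous_stickQ n hf) (hasDerivAt_stick n hf) (f (Fin.cons 1 0)) (fun v => ?_) hW
  simp [stick]

/-- Total variance along the stick. -/
lemma dirichlet_succ_variance (n : ℕ) {α : Fin (n + 2) → ℝ} (hα : ∀ k, 0 < α k)
    {f : (Fin (n + 1) → ℝ) → ℝ} (hf : Continuous f) {ν : Measure (Fin n → ℝ)} {β : Measure ℝ}
    (hν : ν = dirichlet n fun k => α k.succ)
    (hβ : β = betaMeasure (α 0) (∑ k : Fin (n + 1), α k.succ)) :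
    (∫ x, f x ^ 2 ∂dirichlet (n + 1) α) - (∫ x, f x ∂dirichlet (n + 1) α) ^ 2
      = ((∫ z, (∫ v, f (stick n (z, v)) ∂ν) ^ 2 ∂β) - (∫ z, ∫ v, f (stick n (z, v)) ∂ν ∂β) ^ 2)
        + ∫ z, ((∫ v, f (stick n (z, v)) ^ 2 ∂ν) - (∫ v, f (stick n (z, v)) ∂ν) ^ 2) ∂β := by
  have ha0 : 0 < ∑ k : Fin (n + 1), α k.succ :=
    Finset.sum_pos (fun k _ => hα _) Finset.univ_nonempty
  have : IsProbabilityMeasure ν := hν ▸ isProbabilityMeasure_dirichlet n fun k => hα k.succ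
  have hmem : ∀ᵐ v ∂ν, v ∈ simplex n := hν ▸ ae_dirichlet_mem n _
  have hF : Continuous (Function.uncurry fun z v => f (stick n (z, v))) :=
    hf.comp (continuous_stick n)
  have hm := continuous_fibre_integral (isCompact_simplex n) hmem hF
  have hF2 : Continuous (Function.uncurry fun z v => f (stick n (z, v)) ^ 2) := hF.pow 2
  have hm2 := continuous_fibre_integral (isCompact_simplex n) hmem hF2
  rw [integral_dirichlet_succ n hα hf,
    integral_dirichlet_succ n hα (g := fun x => f x ^ 2) (by fun_prop), ← hν, ← hβ,
    integral_sub]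
  · ring
  · exact hβ ▸ integrable_beta_of_continuous (hα 0) ha0 hm2
  · exact hβ ▸ integrable_beta_of_continuous (hα 0) ha0 (hm.pow 2)

lemma continuous_wf {n : ℕ} {f : (Fin n → ℝ) → ℝ} (hf : ContDiff ℝ 1 f) : Continuous (wf n f) := by
  have := continuous_pd hf
  unfold wf
  fun_prop

lemma continuous_starEnergy {n : ℕ} {f : (Fin (n + 1) → ℝ) → ℝ} (hf : ContDiff ℝ 1 f) :
    Continuous (starEnergy n f) := by
  have := continuous_pd hf
  unfold starEnergy
  fun_prop

/-- Sharp Poincaré inequality for the Wright–Fisher energy. -/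
lemma wf_poincare (n : ℕ) : ∀ {α : Fin (n + 1) → ℝ}, (∀ k, 0 < α k) →
    ∀ f : (Fin n → ℝ) → ℝ, ContDiff ℝ 1 f →
      (∑ k, α k) * ((∫ v, f v ^ 2 ∂dirichlet n α) - (∫ v, f v ∂dirichlet n α) ^ 2)
        ≤ ∫ v, wf n f v ∂dirichlet n α := by
  induction n with
  | zero =>
    intro α hα f _
    have := isProbabilityMeasure_dirichlet 0 hα
    have h : ∀ x, f x = f 0 := fun x => congrArg f (Subsingleton.elim _ _)
    simp [h, wf]
  | succ n ih =>
    intro α hα f hf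
    obtain ⟨ν, hν⟩ : ∃ ν, ν = dirichlet n fun k => α k.succ := ⟨_, rfl⟩
    obtain ⟨a, ha⟩ : ∃ a, a = ∑ k : Fin (n + 1), α k.succ := ⟨_, rfl⟩
    obtain ⟨β, hβ⟩ : ∃ β, β = betaMeasure (α 0) a := ⟨_, rfl⟩
    have ha0 : 0 < a := ha ▸ Finset.sum_pos (fun k _ => hα _) Finset.univ_nonempty
    obtain ⟨h1, h2⟩ := dirichlet_stick_step n hα (ih fun k => hα k.succ) hf hν ha hβ
    have : IsProbabilityMeasure ν := hν ▸ isProbabilityMeasure_dirichlet n fun k => hα k.succ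
    have hmem : ∀ᵐ v ∂ν, v ∈ simplex n := hν ▸ ae_dirichlet_mem n _
    have I : ∀ {g : (Fin n → ℝ) → ℝ}, Continuous g → Integrable g ν :=
      integrable_of_compact_support (isCompact_simplex n) hmem
    have J : ∀ {g : ℝ → ℝ}, Continuous g → Integrable g β := fun hg =>
      hβ ▸ integrable_beta_of_continuous (hα 0) ha0 hg
    have C : ∀ {F : ℝ → (Fin n → ℝ) → ℝ}, Continuous (Function.uncurry F) →
        Continuous fun z => ∫ v, F z v ∂ν :=
      continuous_fibre_integral (isCompact_simplex n) hmem
    have hF : Continuous (Function.uncurry fun z v => f (stick n (z, v))) :=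
      hf.continuous.comp (continuous_stick n)
    have cm := C hF
    have cm2 : Continuous fun z => ∫ v, f (stick n (z, v)) ^ 2 ∂ν := C (hF.pow 2)
    have hP := continuous_stickP n hf
    have hQ := continuous_stickQ n hf
    have cP : Continuous fun z => ∫ v, stickP n f z v ^ 2 ∂ν := C (hP.pow 2)
    have cQ := C hQ
    have hPz : ∀ z, Continuous (stickP n f z) := fun z =>
      hP.comp (by fun_prop : Continuous fun v => (z, v))
    have hQz : ∀ z, Continuous (stickQ n f z) := fun z =>
      hQ.comp (by fun_prop : Continuous fun v => (z, v))
    -- `a * ∫ W ≤ ∫ (1 - z)² Q`, combined below with `z (1 - z) + (1 - z)² = 1 - z`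
    have h3 : a * ∫ z, ((∫ v, f (stick n (z, v)) ^ 2 ∂ν) - (∫ v, f (stick n (z, v)) ∂ν) ^ 2) ∂β
        ≤ ∫ z, (1 - z) ^ 2 * ∫ v, stickQ n f z v ∂ν ∂β := by
      rw [← integral_const_mul]
      exact integral_mono (J (by fun_prop)) (J (by fun_prop)) h2
    have h4 : ∫ x, wf (n + 1) f x ∂dirichlet (n + 1) α
        = (∫ z, z * (1 - z) * ((∫ v, stickP n f z v ^ 2 ∂ν) + ∫ v, stickQ n f z v ∂ν) ∂β)
          + ∫ z, (1 - z) ^ 2 * ∫ v, stickQ n f z v ∂ν ∂β := by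
      rw [integral_dirichlet_succ n hα (continuous_wf hf), ← hν, ← ha, ← hβ,
        ← integral_add (J (by fun_prop)) (J (by fun_prop))]
      refine integral_congr_ae (ae_of_all _ fun z => ?_)
      have := hPz z
      have := hQz z
      simp only [wf_at_stick]
      rw [integral_add (I (by fun_prop)) (I (by fun_prop)), integral_const_mul, integral_const_mul]
      ring
    have hs : ∑ k, α k = a + α 0 := by rw [Fin.sum_univ_succ, ← ha, add_comm]
    rw [h4, dirichlet_succ_variance n hα hf.continuous hν (ha ▸ hβ), hs, mul_add, add_mul _ _ (∫ z, _ ∂β)]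
    linarith

/-- Sharp Poincaré inequality for the star centred at vertex `0`, with constant `α 0`. -/
lemma star_poincare (n : ℕ) {α : Fin (n + 2) → ℝ} (hα : ∀ k, 0 < α k)
    {f : (Fin (n + 1) → ℝ) → ℝ} (hf : ContDiff ℝ 1 f) :
    α 0 * ((∫ v, f v ^ 2 ∂dirichlet (n + 1) α) - (∫ v, f v ∂dirichlet (n + 1) α) ^ 2)
        ≤ ∫ v, starEnergy n f v ∂dirichlet (n + 1) α := by
  obtain ⟨ν, hν⟩ : ∃ ν, ν = dirichlet n fun k => α k.succ := ⟨_, rfl⟩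
  obtain ⟨a, ha⟩ : ∃ a, a = ∑ k : Fin (n + 1), α k.succ := ⟨_, rfl⟩
  obtain ⟨β, hβ⟩ : ∃ β, β = betaMeasure (α 0) a := ⟨_, rfl⟩
  have ha0 : 0 < a := ha ▸ Finset.sum_pos (fun k _ => hα _) Finset.univ_nonempty
  obtain ⟨h1, -⟩ := dirichlet_stick_step n hα (wf_poincare n fun k => hα k.succ) hf hν ha hβ
  have : IsProbabilityMeasure ν := hν ▸ isProbabilityMeasure_dirichlet n fun k => hα k.succ
  have : IsProbabilityMeasure β := hβ ▸ isProbabilityMeasureBeta (hα 0) ha0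
  have hmem : ∀ᵐ v ∂ν, v ∈ simplex n := hν ▸ ae_dirichlet_mem n _
  have I : ∀ {g : (Fin n → ℝ) → ℝ}, Continuous g → Integrable g ν :=
    integrable_of_compact_support (isCompact_simplex n) hmem
  have J : ∀ {g : ℝ → ℝ}, Continuous g → Integrable g β := fun hg =>
    hβ ▸ integrable_beta_of_continuous (hα 0) ha0 hg
  have hP := continuous_stickP n hf
  have hQ := continuous_stickQ n hf
  have hPz : ∀ z, Continuous (stickP n f z) := fun z =>
    hP.comp (by fun_prop : Continuous fun v => (z, v))
  have hQz : ∀ z, Continuous (stickQ n f z) := fun z =>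
    hQ.comp (by fun_prop : Continuous fun v => (z, v))
  have h4 : ∫ x, starEnergy n f x ∂dirichlet (n + 1) α
      = ∫ z, z * (1 - z) * ((∫ v, stickP n f z v ^ 2 ∂ν) + ∫ v, stickQ n f z v ∂ν) ∂β := by
    rw [integral_dirichlet_succ n hα (continuous_starEnergy hf), ← hν, ← ha, ← hβ]
    refine integral_congr_ae (ae_of_all _ fun z => ?_)
    have := hPz z
    have := hQz z
    simp only [star_at_stick]
    rw [integral_const_mul, integral_add (I (by fun_prop)) (I (by fun_prop))]
  -- the variance of the fibre mean is nonnegative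
  have hm : Continuous fun z => ∫ v, f (stick n (z, v)) ∂ν :=
    continuous_fibre_integral (F := fun z v => f (stick n (z, v))) (isCompact_simplex n) hmem
      (hf.continuous.comp (continuous_stick n))
  have h5 : 0 ≤ (∫ z, (∫ v, f (stick n (z, v)) ∂ν) ^ 2 ∂β)
      - (∫ z, ∫ v, f (stick n (z, v)) ∂ν ∂β) ^ 2 := by
    have hi := (memLp_two_iff_integrable_sq hm.aestronglyMeasurable).2 (J (hm.pow 2))
    have := variance_nonneg (fun z => ∫ v, f (stick n (z, v)) ∂ν) β
    rwa [variance_eq_sub hi] at this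
  rw [h4, dirichlet_succ_variance n hα hf.continuous hν (ha ▸ hβ), mul_add]
  nlinarith [mul_nonneg ha0.le h5]

/-! ### Moving the centre of the star -/

/-- The affine involution of the simplex exchanging coordinate `0` with the implicit last one. -/
def reflect (n : ℕ) (x : Fin (n + 1) → ℝ) : Fin (n + 1) → ℝ :=
  Fin.cons (1 - ∑ i, x i) fun i => x i.succ

lemma reflect_zero (n : ℕ) (x : Fin (n + 1) → ℝ) : reflect n x 0 = 1 - ∑ i, x i := rfl

lemma reflect_succ (n : ℕ) (x : Fin (n + 1) → ℝ) (i : Fin n) : reflect n x i.succ = x i.succ := rfl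

lemma one_sub_sum_reflect (n : ℕ) (x : Fin (n + 1) → ℝ) : 1 - ∑ i, reflect n x i = x 0 := by
  rw [Fin.sum_univ_succ, reflect_zero, Fin.sum_univ_succ]
  simp only [reflect_succ]
  ring

lemma contDiff_reflect (n : ℕ) : ContDiff ℝ 1 (reflect n) := by
  refine contDiff_pi.2 (Fin.cases ?_ fun i => ?_)
  · simp only [reflect_zero]
    fun_prop
  · simp only [reflect_succ]
    fun_prop

lemma lintegral_pi_succ (n : ℕ) {g : (Fin (n + 1) → ℝ) → ENNReal} (hg : Measurable g) :
    ∫⁻ x, g x = ∫⁻ w : Fin n → ℝ, ∫⁻ z : ℝ, g (Fin.cons z w) := by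
  rw [← (volume_preserving_piFinSuccAbove (fun _ : Fin (n + 1) => ℝ) 0).symm.lintegral_comp hg,
    Measure.volume_eq_prod, lintegral_prod_symm]
  · refine lintegral_congr fun w => lintegral_congr fun z => ?_
    have e : (MeasurableEquiv.piFinSuccAbove (fun _ : Fin (n + 1) => ℝ) 0).symm (z, w)
        = Fin.cons z w := by
      simp [MeasurableEquiv.piFinSuccAbove, Fin.insertNthEquiv]
    rw [e]
  · exact (hg.comp (MeasurableEquiv.measurable _)).aemeasurable

lemma lintegral_reflect (n : ℕ) {g : (Fin (n + 1) → ℝ) → ENNReal} (hg : Measurable g) :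
    ∫⁻ x, g (reflect n x) = ∫⁻ x, g x := by
  have mgr : Measurable fun x => g (reflect n x) :=
    hg.comp (contDiff_reflect n).continuous.measurable
  rw [lintegral_pi_succ n hg, lintegral_pi_succ n mgr]
  refine lintegral_congr fun w => ?_
  -- at fixed `w` the reflection is `z ↦ (1 - ∑ w) - z`
  have e : ∀ z : ℝ, reflect n (Fin.cons z w) = Fin.cons ((1 - ∑ i, w i) - z) w := by
    intro z
    simp only [reflect, Fin.sum_univ_succ, Fin.cons_zero, Fin.cons_succ]
    congr 1
    ring
  simp only [e]
  exact lintegral_sub_left_eq_self (fun z => g (Fin.cons z w)) _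

lemma reflect_mem_iff (n : ℕ) (x : Fin (n + 1) → ℝ) :
    reflect n x ∈ simplex (n + 1) ↔ x ∈ simplex (n + 1) := by
  have key : ∀ y ∈ simplex (n + 1), reflect n y ∈ simplex (n + 1) := by
    intro y hy
    have h0 : 0 ≤ ∑ i, y i := Finset.sum_nonneg fun i _ => (hy.1 i).1
    refine ⟨fun i => ?_, ?_⟩
    · refine Fin.cases ?_ (fun i => hy.1 i.succ) i
      rw [reflect_zero]
      exact ⟨sub_nonneg.2 hy.2, by linarith⟩
    · linarith [one_sub_sum_reflect n y, (hy.1 0).1]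
  refine ⟨fun h => ?_, key x⟩
  have e : reflect n (reflect n x) = x := by
    ext i
    refine Fin.cases ?_ (fun i => rfl) i
    rw [reflect_zero, one_sub_sum_reflect]
  exact e ▸ key _ h

/-- Parameters with those of vertex `0` and of the last vertex exchanged. -/
def swapEnds (n : ℕ) (α : Fin (n + 2) → ℝ) : Fin (n + 2) → ℝ :=
  fun k => α (Equiv.swap 0 (Fin.last (n + 1)) k)

lemma dirichletPDF_reflect (n : ℕ) (α : Fin (n + 2) → ℝ) (x : Fin (n + 1) → ℝ) :
    dirichletPDF (n + 1) α (reflect n x) = dirichletPDF (n + 1) (swapEnds n α) x := by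
  by_cases hx : x ∈ simplex (n + 1)
  · rw [dirichletPDF, dirichletPDF, indicator_of_mem hx,
      indicator_of_mem ((reflect_mem_iff n x).2 hx)]
    have h1 : ∑ k, swapEnds n α k = ∑ k, α k := Equiv.sum_comp _ α
    have h2 : ∏ k, Real.Gamma (swapEnds n α k) = ∏ k, Real.Gamma (α k) :=
      Equiv.prod_comp (Equiv.swap 0 (Fin.last (n + 1))) fun k => Real.Gamma (α k)
    have h3 : swapEnds n α 0 = α (Fin.last (n + 1)) := by simp [swapEnds]
    have h4 : swapEnds n α (Fin.last (n + 1)) = α 0 := by simp [swapEnds]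
    have h5 : ∀ i : Fin n, swapEnds n α i.succ.castSucc = α i.succ.castSucc := by
      intro i
      refine congrArg α (Equiv.swap_apply_of_ne_of_ne ?_ (Fin.castSucc_lt_last _).ne)
      rw [← Fin.succ_castSucc]
      exact Fin.succ_ne_zero _
    simp only [dirichletDensity, Real.rpow_eq_pow]
    rw [h1, h2, h4, one_sub_sum_reflect,
      Fin.prod_univ_succ (fun i => reflect n x i ^ (α i.castSucc - 1)),
      Fin.prod_univ_succ (fun i => x i ^ (swapEnds n α i.castSucc - 1))]
    simp only [h5, reflect_zero, reflect_succ, Fin.castSucc_zero, h3]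
    congr 1
    ring
  · rw [dirichletPDF, dirichletPDF, indicator_of_notMem hx,
      indicator_of_notMem (mt (reflect_mem_iff n x).1 hx)]

lemma dirichlet_eq_map_reflect (n : ℕ) (α : Fin (n + 2) → ℝ) :
    dirichlet (n + 1) α = (dirichlet (n + 1) (swapEnds n α)).map (reflect n) := by
  refine Measure.ext_of_lintegral _ fun f hf => ?_
  have mr := (contDiff_reflect n).continuous.measurable
  have mD := measurable_dirichletPDF (n + 1) α
  have mfr : Measurable fun x => f (reflect n x) := hf.comp mr
  rw [lintegral_map hf mr, dirichlet_eq, dirichlet_eq,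
    lintegral_withDensity_eq_lintegral_mul _ mD hf,
    lintegral_withDensity_eq_lintegral_mul _ (measurable_dirichletPDF _ _) mfr,
    ← lintegral_reflect n (mD.mul hf)]
  simp only [Pi.mul_apply, dirichletPDF_reflect]

lemma integral_dirichlet_reflect (n : ℕ) (α : Fin (n + 2) → ℝ)
    {g : (Fin (n + 1) → ℝ) → ℝ} (hg : Continuous g) :
    ∫ x, g x ∂dirichlet (n + 1) α
      = ∫ x, g (reflect n x) ∂dirichlet (n + 1) (swapEnds n α) := by
  rw [dirichlet_eq_map_reflect,
    integral_map (contDiff_reflect n).continuous.aemeasurable hg.aestronglyMeasurable]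

/-- The reflection turns the energy of the Dirichlet inequality into that of the star centred at
vertex `0`. -/
lemma starEnergy_reflect (n : ℕ) {f : (Fin (n + 1) → ℝ) → ℝ} (hf : ContDiff ℝ 1 f)
    (x : Fin (n + 1) → ℝ) :
    starEnergy n (fun x => f (reflect n x)) x
      = (1 - ∑ i, reflect n x i) * ∑ i, reflect n x i * pd (n + 1) i f (reflect n x) ^ 2 := by
  have hd : Differentiable ℝ (reflect n) := (contDiff_reflect n).differentiable one_ne_zero
  have h0 : pd (n + 1) 0 (fun x => f (reflect n x)) x = -pd (n + 1) 0 f (reflect n x) := by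
    rw [pd_comp_affine hf hd 0 (w := -Pi.single 0 1) x]
    · simp [Pi.single_apply]
    · intro t
      ext j
      refine Fin.cases ?_ (fun j => ?_) j
      · simp [reflect_zero, Finset.sum_add_distrib, ← Finset.mul_sum]
        ring
      · simp [reflect_succ]
  have h1 : ∀ i : Fin n, pd (n + 1) i.succ (fun x => f (reflect n x)) x
      = pd (n + 1) i.succ f (reflect n x) - pd (n + 1) 0 f (reflect n x) := by
    intro i
    rw [pd_comp_affine hf hd i.succ (w := Pi.single i.succ 1 - Pi.single 0 1) x]
    · simp [Pi.single_apply, sub_mul, Finset.sum_sub_distrib]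
    · intro t
      ext j
      refine Fin.cases ?_ (fun j => ?_) j
      · simp [reflect_zero, Finset.sum_add_distrib, ← Finset.mul_sum]
        ring
      · simp [reflect_succ]
  rw [one_sub_sum_reflect, starEnergy, Fin.sum_univ_succ (fun i => reflect n x i * _ ^ 2)]
  simp only [h0, h1, reflect_zero, reflect_succ]
  congr 2
  · ring
  · exact Finset.sum_congr rfl fun i _ => by ring

lemma dirichlet_poincare (n : ℕ) {α : Fin (n + 2) → ℝ} (hα : ∀ k, 0 < α k)
    {f : (Fin (n + 1) → ℝ) → ℝ} (hf : ContDiff ℝ 1 f) :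
    α (Fin.last (n + 1))
        * ((∫ x, f x ^ 2 ∂dirichlet (n + 1) α) - (∫ x, f x ∂dirichlet (n + 1) α) ^ 2)
      ≤ ∫ x, (1 - ∑ i, x i) * ∑ i, x i * pd (n + 1) i f x ^ 2 ∂dirichlet (n + 1) α := by
  have hp := continuous_pd hf
  have hc := hf.continuous
  have h := star_poincare n (α := swapEnds n α) (fun k => hα _) (hf.comp (contDiff_reflect n))
  have e : swapEnds n α 0 = α (Fin.last (n + 1)) := by simp [swapEnds]
  rw [integral_dirichlet_reflect n α hc,
    integral_dirichlet_reflect n α (g := fun x => f x ^ 2) (by fun_prop),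
    integral_dirichlet_reflect n α (g := fun x => (1 - ∑ i, x i) * ∑ i, x i * pd (n + 1) i f x ^ 2)
      (by fun_prop), ← e]
  simp only [← starEnergy_reflect n hf]
  exact h

/-! ### Moments and optimality -/

/-- Size-biasing: parameters with that of vertex `k` raised by one. -/
def bump {N : ℕ} (α : Fin (N + 1) → ℝ) (k : Fin N) : Fin (N + 1) → ℝ :=
  fun j => α j + if j = k.castSucc then 1 else 0

lemma bump_pos {N : ℕ} {α : Fin (N + 1) → ℝ} (hα : ∀ k, 0 < α k) (k : Fin N) (j : Fin (N + 1)) :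
    0 < bump α k j := by
  unfold bump
  split_ifs
  · linarith [hα j]
  · simpa using hα j

lemma sum_bump {N : ℕ} (α : Fin (N + 1) → ℝ) (k : Fin N) : ∑ j, bump α k j = ∑ j, α j + 1 := by
  simp [bump, Finset.sum_add_distrib]

lemma dirichletDensity_nonneg {N : ℕ} {α : Fin (N + 1) → ℝ} (hα : ∀ k, 0 < α k) {x : Fin N → ℝ}
    (hx : x ∈ simplex N) : 0 ≤ dirichletDensity N α x := by
  simp only [dirichletDensity, Real.rpow_eq_pow]
  have h1 : 0 ≤ Real.Gamma (∑ k, α k) :=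
    (Real.Gamma_pos_of_pos (Finset.sum_pos (fun k _ => hα k) Finset.univ_nonempty)).le
  have h2 : 0 ≤ ∏ k, Real.Gamma (α k) :=
    Finset.prod_nonneg fun k _ => (Real.Gamma_pos_of_pos (hα k)).le
  have h3 : 0 ≤ ∏ i : Fin N, x i ^ (α i.castSucc - 1) :=
    Finset.prod_nonneg fun i _ => Real.rpow_nonneg (hx.1 i).1 _
  exact mul_nonneg (mul_nonneg (div_nonneg h1 h2) (Real.rpow_nonneg (sub_nonneg.2 hx.2) _)) h3

/-- Multiplying the density by a coordinate raises the corresponding parameter by one, up to a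
constant. -/
lemma mul_dirichletDensity {N : ℕ} {α : Fin (N + 1) → ℝ} (hα : ∀ k, 0 < α k) (k : Fin N)
    {x : Fin N → ℝ} (hx : x ∈ simplex N) :
    x k * dirichletDensity N α x
      = α k.castSucc / (∑ j, α j) * dirichletDensity N (bump α k) x := by
  have hA : 0 < ∑ j, α j := Finset.sum_pos (fun k _ => hα k) Finset.univ_nonempty
  have hG : ∏ j, Real.Gamma (bump α k j) = α k.castSucc * ∏ j, Real.Gamma (α j) := by
    have : ∀ j, Real.Gamma (bump α k j)
        = (if j = k.castSucc then α j else 1) * Real.Gamma (α j) := by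
      intro j
      unfold bump
      split_ifs
      · exact Real.Gamma_add_one (hα j).ne'
      · simp
    simp only [this, Finset.prod_mul_distrib]
    simp
  have hX : ∏ i : Fin N, x i ^ (bump α k i.castSucc - 1)
      = x k * ∏ i : Fin N, x i ^ (α i.castSucc - 1) := by
    have : ∀ i : Fin N, x i ^ (bump α k i.castSucc - 1)
        = (if i = k then x i else 1) * x i ^ (α i.castSucc - 1) := by
      intro i
      by_cases h : i = k
      · have e : bump α k i.castSucc - 1 = (α i.castSucc - 1) + 1 := by
          simp [bump, h]
        rw [if_pos h, e, Real.rpow_add_one' (hx.1 i).1 (by simpa using (hα _).ne'), mul_comm]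
      · simp [bump, h]
    simp only [this, Finset.prod_mul_distrib]
    simp
  have hL : bump α k (Fin.last N) = α (Fin.last N) := by
    simp [bump, (Fin.castSucc_lt_last k).ne']
  have hP : ∏ j, Real.Gamma (α j) ≠ 0 :=
    Finset.prod_ne_zero_iff.2 fun j _ => (Real.Gamma_pos_of_pos (hα j)).ne'
  have hk := (hα k.castSucc).ne'
  simp only [dirichletDensity, Real.rpow_eq_pow]
  rw [hG, hX, hL, sum_bump, Real.Gamma_add_one hA.ne']
  field_simp

lemma integral_dirichlet {N : ℕ} {α : Fin (N + 1) → ℝ} (hα : ∀ k, 0 < α k)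
    (g : (Fin N → ℝ) → ℝ) :
    ∫ x, g x ∂dirichlet N α = ∫ x in simplex N, dirichletDensity N α x * g x := by
  rw [dirichlet, integral_withDensity_eq_integral_toReal_smul
    (measurable_dirichletDensity N α).ennreal_ofReal (by simp)]
  refine setIntegral_congr_fun (isCompact_simplex N).isClosed.measurableSet fun x hx => ?_
  simp only [smul_eq_mul]
  rw [ENNReal.toReal_ofReal (dirichletDensity_nonneg hα hx)]

lemma integral_coord_mul {N : ℕ} {α : Fin (N + 1) → ℝ} (hα : ∀ k, 0 < α k) (k : Fin N)
    (g : (Fin N → ℝ) → ℝ) :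
    ∫ x, x k * g x ∂dirichlet N α
      = α k.castSucc / (∑ j, α j) * ∫ x, g x ∂dirichlet N (bump α k) := by
  rw [integral_dirichlet hα, integral_dirichlet (bump_pos hα k), ← integral_const_mul]
  refine setIntegral_congr_fun (isCompact_simplex N).isClosed.measurableSet fun x hx => ?_
  have := mul_dirichletDensity hα k hx
  calc dirichletDensity N α x * (x k * g x) = (x k * dirichletDensity N α x) * g x := by ring
    _ = _ := by rw [this]; ring

lemma integral_coord {N : ℕ} {α : Fin (N + 1) → ℝ} (hα : ∀ k, 0 < α k) (k : Fin N) :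
    ∫ x, x k ∂dirichlet N α = α k.castSucc / ∑ j, α j := by
  have := isProbabilityMeasure_dirichlet N (bump_pos hα k)
  simpa using integral_coord_mul hα k fun _ => 1

lemma integral_coord_mul_coord {N : ℕ} {α : Fin (N + 1) → ℝ} (hα : ∀ k, 0 < α k) (k l : Fin N) :
    ∫ x, x k * x l ∂dirichlet N α = α k.castSucc * (α l.castSucc + if l = k then 1 else 0)
      / ((∑ j, α j) * (∑ j, α j + 1)) := by
  rw [integral_coord_mul hα k fun x => x l, integral_coord (bump_pos hα k), sum_bump,
    div_mul_div_comm]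
  simp [bump]

lemma integral_coord_mul_rest {N : ℕ} {α : Fin (N + 1) → ℝ} (hα : ∀ k, 0 < α k) (k : Fin N) :
    ∫ x, x k * (1 - ∑ i, x i) ∂dirichlet N α
      = α k.castSucc * α (Fin.last N) / ((∑ j, α j) * (∑ j, α j + 1)) := by
  have hb := bump_pos hα k
  have := isProbabilityMeasure_dirichlet N hb
  have hA : 0 < ∑ j, α j := Finset.sum_pos (fun k _ => hα k) Finset.univ_nonempty
  have I : ∀ {g : (Fin N → ℝ) → ℝ}, Continuous g → Integrable g (dirichlet N (bump α k)) :=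
    integrable_of_compact_support (isCompact_simplex N) (ae_dirichlet_mem N _)
  have hL : bump α k (Fin.last N) = α (Fin.last N) := by
    simp [bump, (Fin.castSucc_lt_last k).ne']
  have hs := sum_bump α k
  rw [Fin.sum_univ_castSucc, hL] at hs
  rw [integral_coord_mul hα k, integral_sub (I (by fun_prop)) (I (by fun_prop)),
    integral_finsetSum _ fun i _ => I (by fun_prop)]
  simp only [integral_coord hb, ← Finset.sum_div, sum_bump]
  rw [← eq_sub_iff_add_eq] at hs
  rw [hs]
  simp
  field_simp
  ring

/-- Sharpness: `x₀ / α₀ - x₁ / α₁` is an eigenfunction of minus the generator, with eigenvalue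
the last parameter, so equality holds for it in the Poincaré inequality. -/
lemma dirichlet_poincare_optimal {N : ℕ} (hN : 2 ≤ N) {α : Fin (N + 1) → ℝ} (hα : ∀ k, 0 < α k) :
    ∃ f : (Fin N → ℝ) → ℝ, ContDiff ℝ 1 f ∧
      0 < (∫ x, f x ^ 2 ∂dirichlet N α) - (∫ x, f x ∂dirichlet N α) ^ 2 ∧
      ∫ x, (1 - ∑ i, x i) * ∑ i, x i * pd N i f x ^ 2 ∂dirichlet N α
        = α (Fin.last N) * ((∫ x, f x ^ 2 ∂dirichlet N α) - (∫ x, f x ∂dirichlet N α) ^ 2) := by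
  have := isProbabilityMeasure_dirichlet N hα
  have I : ∀ {g : (Fin N → ℝ) → ℝ}, Continuous g → Integrable g (dirichlet N α) :=
    integrable_of_compact_support (isCompact_simplex N) (ae_dirichlet_mem N _)
  have hA : 0 < ∑ j, α j := Finset.sum_pos (fun k _ => hα k) Finset.univ_nonempty
  set A := ∑ j, α j with hAdef
  obtain ⟨p, hp⟩ : ∃ p : Fin N, p = ⟨0, by omega⟩ := ⟨_, rfl⟩
  obtain ⟨q, hq⟩ : ∃ q : Fin N, q = ⟨1, by omega⟩ := ⟨_, rfl⟩
  have hpq : p ≠ q := by simp [hp, hq]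
  have hqp := hpq.symm
  have ap := hα p.castSucc
  have aq := hα q.castSucc
  set s := α p.castSucc
  set t := α q.castSucc
  have hcd : ContDiff ℝ 1 fun x : Fin N → ℝ => x p / s - x q / t := by fun_prop
  have hpd : ∀ i x, pd N i (fun x : Fin N → ℝ => x p / s - x q / t) x
      = (Pi.single i (1 : ℝ) : Fin N → ℝ) p / s - (Pi.single i (1 : ℝ) : Fin N → ℝ) q / t := by
    intro i x
    have h : HasFDerivAt (fun x : Fin N → ℝ => x p / s - x q / t)
        (s⁻¹ • ContinuousLinearMap.proj (R := ℝ) (φ := fun _ : Fin N => ℝ) p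
          - t⁻¹ • ContinuousLinearMap.proj (R := ℝ) (φ := fun _ : Fin N => ℝ) q) x := by
      have e : (fun x : Fin N → ℝ => x p / s - x q / t)
          = ⇑(s⁻¹ • ContinuousLinearMap.proj (R := ℝ) (φ := fun _ : Fin N => ℝ) p
          - t⁻¹ • ContinuousLinearMap.proj (R := ℝ) (φ := fun _ : Fin N => ℝ) q) := by
        ext x
        simp [div_eq_inv_mul]
      rw [e]
      exact ContinuousLinearMap.hasFDerivAt _
    rw [pd, h.fderiv]
    simp [div_eq_inv_mul]
  have m1 : ∫ x, (x p / s - x q / t) ∂dirichlet N α = 0 := by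
    rw [integral_sub (I (by fun_prop)) (I (by fun_prop)), integral_div, integral_div,
      integral_coord hα, integral_coord hα]
    change s / A / s - t / A / t = 0
    field_simp
    ring
  have m2 : ∫ x, (x p / s - x q / t) ^ 2 ∂dirichlet N α = (1 / s + 1 / t) / (A * (A + 1)) := by
    have e : ∀ x : Fin N → ℝ, (x p / s - x q / t) ^ 2
        = (1 / s ^ 2) * (x p * x p) - (2 / (s * t)) * (x p * x q) + (1 / t ^ 2) * (x q * x q) := by
      intro x
      field_simp
      ring
    simp only [e]
    rw [integral_add (I (by fun_prop)) (I (by fun_prop)),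
      integral_sub (I (by fun_prop)) (I (by fun_prop)), integral_const_mul, integral_const_mul,
      integral_const_mul, integral_coord_mul_coord hα, integral_coord_mul_coord hα,
      integral_coord_mul_coord hα]
    simp only [if_true, if_neg hqp, ← hAdef]
    change 1 / s ^ 2 * (s * (s + 1) / (A * (A + 1))) - 2 / (s * t) * (s * (t + 0) / (A * (A + 1)))
      + 1 / t ^ 2 * (t * (t + 1) / (A * (A + 1))) = _
    field_simp
    ring
  have m3 : ∫ x, (1 - ∑ i, x i) * ∑ i, x i * pd N i (fun x => x p / s - x q / t) x ^ 2
      ∂dirichlet N α = α (Fin.last N) * ((1 / s + 1 / t) / (A * (A + 1))) := by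
    have e : ∀ x : Fin N → ℝ,
        (1 - ∑ i, x i) * ∑ i, x i * pd N i (fun x => x p / s - x q / t) x ^ 2
          = (1 / s ^ 2) * (x p * (1 - ∑ i, x i)) + (1 / t ^ 2) * (x q * (1 - ∑ i, x i)) := by
      intro x
      have : ∑ i, x i * pd N i (fun x => x p / s - x q / t) x ^ 2
          = ∑ i, ((if i = p then x i / s ^ 2 else 0) + if i = q then x i / t ^ 2 else 0) := by
        refine Finset.sum_congr rfl fun i _ => ?_
        rw [hpd]
        by_cases h1 : i = p
        · subst h1
          simp [hpq, hqp]
          ring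
        · by_cases h2 : i = q
          · subst h2
            simp [hpq, hqp]
            ring
          · simp [h1, h2, Ne.symm h1, Ne.symm h2]
      rw [this, Finset.sum_add_distrib]
      simp
      ring
    simp only [e]
    rw [integral_add (I (by fun_prop)) (I (by fun_prop)), integral_const_mul, integral_const_mul,
      integral_coord_mul_rest hα, integral_coord_mul_rest hα]
    change 1 / s ^ 2 * (s * α (Fin.last N) / (A * (A + 1)))
      + 1 / t ^ 2 * (t * α (Fin.last N) / (A * (A + 1))) = _
    field_simp
  refine ⟨fun x => x p / s - x q / t, hcd, ?_, ?_⟩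
  · rw [m1, m2]
    have : 0 < (1 / s + 1 / t) / (A * (A + 1)) := by positivity
    simpa using this
  · rw [m1, m2, m3]
    ring

end

/-- Sharp Poincaré inequality for the Dirichlet distribution: for every C¹ function f,
Var_μ(f) ≤ (1/α_{N+1}) ∫ (1−|x|₁) Σ_n x_n (∂_n f)² dμ, and the constant 1/α_{N+1}
cannot be improved. -/
theorem dirichlet_sharp_poincare (N : ℕ) (hN : 2 ≤ N) (α : Fin (N + 1) → ℝ)
    (hα : ∀ k, 0 < α k) :
    (∀ f : (Fin N → ℝ) → ℝ, ContDiff ℝ 1 f →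
      (∫ x, (f x) ^ 2 ∂(dirichlet N α)) - (∫ x, f x ∂(dirichlet N α)) ^ 2
        ≤ (1 / α (Fin.last N))
          * ∫ x, (1 - ∑ i, x i) * ∑ n, x n * (pd N n f x) ^ 2 ∂(dirichlet N α)) ∧
    (∀ c : ℝ,
      (∀ f : (Fin N → ℝ) → ℝ, ContDiff ℝ 1 f →
        (∫ x, (f x) ^ 2 ∂(dirichlet N α)) - (∫ x, f x ∂(dirichlet N α)) ^ 2
          ≤ c * ∫ x, (1 - ∑ i, x i) * ∑ n, x n * (pd N n f x) ^ 2 ∂(dirichlet N α)) →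
      1 / α (Fin.last N) ≤ c) := by
  have hl := hα (Fin.last N)
  refine ⟨fun f hf => ?_, fun c hc => ?_⟩
  · obtain ⟨n, rfl⟩ : ∃ n, N = n + 1 := ⟨N - 1, by omega⟩
    rw [one_div, ← div_eq_inv_mul, le_div_iff₀' hl]
    exact dirichlet_poincare n hα hf
  · obtain ⟨f, hf, hpos, he⟩ := dirichlet_poincare_optimal hN hα
    have h := hc f hf
    rw [he, ← mul_assoc] at h
    rw [div_le_iff₀ hl]
    exact le_of_mul_le_mul_right (by linarith) hpos

end
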